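/- arXiv:2504.10992 — 12 statements merged into one kernel-verified Lean document; each statement's English description precedes it below -/
import Mathlib

section
/- For every nonzero integer A and every integer ℓ with ℓ ≠ 0 and ℓ ≠ 1, setting m = 3ℓ(1−ℓ), the set of pairs of rational numbers (x, y) ∈ ℚ × ℚ satisfying (x² − A²)(y² − A²) = m·x²·y² is infinite. -/
lemma aux_points (ℓ : ℤ) (k : ℕ) : ∃ a b r s : ℤ, Odd a ∧ Odd b ∧ Odd r ∧ Odd s ∧
    ((2 ^ (k+1) * b) ^ 2 - a ^ 2) * (s ^ 2 - r ^ 2) =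
      (3 * ℓ * (1 - ℓ)) * (2 ^ (k+1) * b) ^ 2 * s ^ 2 := by
  induction k with
  | zero =>
    refine ⟨1, 1, 2 * ℓ - 1, 1, odd_one, odd_one, ⟨ℓ - 1, by ring⟩, odd_one, by ring⟩
  | succ k ih =>
    obtain ⟨a, b, r, s, ha, hb, hr, hs, h⟩ := ih
    obtain ⟨B, hB⟩ : ∃ B : ℤ, B = 2 ^ (k+1) * b := ⟨_, rfl⟩
    rw [← hB] at h
    have hBe : Even B := by
      rw [hB, pow_succ]; exact ⟨2 ^ k * b, by ring⟩
    obtain ⟨c, hc⟩ : ∃ c : ℤ, c = 1 - 3 * ℓ * (1 - ℓ) := ⟨_, rfl⟩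
    have hm : 3 * ℓ * (1 - ℓ) = 1 - c := by rw [hc]; ring
    have hB2 : Even (B ^ 2) := hBe.pow_of_ne_zero (by norm_num)
    have hB4 : Even (B ^ 4) := hBe.pow_of_ne_zero (by norm_num)
    have hD : Odd (a ^ 2 - B ^ 2) := ha.pow.sub_even hB2
    refine ⟨(a ^ 4 - c * B ^ 4) * s, b * a * r * (a ^ 2 - B ^ 2),
      a ^ 4 - 2 * c * a ^ 2 * B ^ 2 + c * B ^ 4, a ^ 4 - 2 * a ^ 2 * B ^ 2 + c * B ^ 4,
      (ha.pow.sub_even (hB4.mul_left c)).mul hs, ((hb.mul ha).mul hr).mul hD,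
      (ha.pow.sub_even (hB2.mul_left _)).add_even (hB4.mul_left c),
      (ha.pow.sub_even (hB2.mul_left _)).add_even (hB4.mul_left c), ?_⟩
    have e : (2:ℤ) ^ (k+1+1) * (b * a * r * (a ^ 2 - B ^ 2))
        = 2 * B * a * r * (a ^ 2 - B ^ 2) := by rw [hB]; ring
    rw [hm] at h ⊢
    have h1 : r ^ 2 * (a ^ 2 - B ^ 2) = s ^ 2 * (a ^ 2 - c * B ^ 2) := by
      linear_combination h
    have e2 : (2 * B * a * r * (a ^ 2 - B ^ 2)) ^ 2
        = 4 * B ^ 2 * a ^ 2 * (a ^ 2 - B ^ 2) * (s ^ 2 * (a ^ 2 - c * B ^ 2)) := by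
      rw [← h1]; ring
    rw [e, e2]
    ring

lemma aux_lt {k j : ℕ} (hkj : k < j) {b b' a a' : ℤ} (hb : Odd b) (ha : Odd a')
    (h : 2 ^ (k+1) * b * a' = 2 ^ (j+1) * b' * a) : False := by
  obtain ⟨d, rfl⟩ := Nat.exists_eq_add_of_lt hkj
  have h2 : b * a' = 2 * (2 ^ d * b' * a) := by
    have : (2:ℤ) ^ (k+1) ≠ 0 := by positivity
    apply mul_left_cancel₀ this
    rw [← mul_assoc, h]; ring
  have := hb.mul ha
  rw [h2] at this
  exact (Int.not_odd_iff_even.2 (even_two_mul _)) this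

/-- For every nonzero integer `A` and every integer `ℓ ∉ {0,1}`, with
`m = 3ℓ(1−ℓ)`, the set of `(x, y) ∈ ℚ × ℚ` with `(x² − A²)(y² − A²) = m·x²·y²` is infinite. -/
theorem stmt1 (A : ℤ) (hA : A ≠ 0) (ℓ : ℤ) (hℓ0 : ℓ ≠ 0) (hℓ1 : ℓ ≠ 1) :
    {p : ℚ × ℚ | (p.1 ^ 2 - (A : ℚ) ^ 2) * (p.2 ^ 2 - (A : ℚ) ^ 2) =
      (3 * (ℓ : ℚ) * (1 - (ℓ : ℚ))) * p.1 ^ 2 * p.2 ^ 2}.Infinite := by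
  choose a b r s ha hb hr hs h using aux_points ℓ
  have hne : ∀ {z : ℤ}, Odd z → (z : ℚ) ≠ 0 := by
    intro z hz h0
    rw [Int.cast_eq_zero.1 h0] at hz
    exact absurd hz (by decide)
  have hAq : (A : ℚ) ≠ 0 := by exact_mod_cast hA
  refine Set.infinite_of_injective_forall_mem
    (f := fun k : ℕ => ((A * (2 ^ (k+1) * b k) / a k : ℚ), (A * s k / r k : ℚ))) ?_ ?_
  · intro k j hkj
    have h1 := (Prod.mk.inj hkj).1
    rw [div_eq_div_iff (hne (ha k)) (hne (ha j)), mul_assoc, mul_assoc (A : ℚ)] at h1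
    have h2 := mul_left_cancel₀ hAq h1
    have h3 : 2 ^ (k+1) * b k * a j = 2 ^ (j+1) * b j * a k := by exact_mod_cast h2
    rcases lt_trichotomy k j with hl | hl | hl
    · exact (aux_lt hl (hb k) (ha j) h3).elim
    · exact hl
    · exact (aux_lt hl (hb j) (ha k) h3.symm).elim
  · intro k
    have hq : (((2:ℚ) ^ (k+1) * b k) ^ 2 - (a k : ℚ) ^ 2) * ((s k : ℚ) ^ 2 - (r k : ℚ) ^ 2) =
      (3 * (ℓ : ℚ) * (1 - ℓ)) * (2 ^ (k+1) * b k) ^ 2 * (s k : ℚ) ^ 2 := by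
      exact_mod_cast h k
    have h1 := hne (ha k)
    have h2 := hne (hr k)
    simp only [Set.mem_ofPred_eq]
    generalize (2:ℚ) ^ (k+1) * b k = B at hq ⊢
    rw [div_pow, div_pow, div_sub' (pow_ne_zero 2 h1), div_sub' (pow_ne_zero 2 h2), div_mul_div_comm,
      mul_assoc (3 * (ℓ : ℚ) * (1 - ℓ)), div_mul_div_comm, mul_div_assoc']
    congr 1
    linear_combination (A : ℚ) ^ 4 * hq
end

section
/- Let A, B, C be nonzero integers and let m be an integer with m ≠ 0 and m ≠ 1 such that −m·B is not the square of any integer. Set a = 1−m, b = −A², c = −2mC, d = A⁴, e = −(A⁶ + mC² + B). Then: (i) for all x, y, z one has the polynomial identity (x²−A²)(y²−A²)(z²−A²) − m(xyz+C)² − B = a·x²y²z² + b·(x²y² + x²z² + y²z²) + c·xyz + d·(x²+y²+z²) + e; and (ii) these coefficients satisfy the non-degeneracy conditions c ≠ 0, a·d ≠ b², and b·e ≠ d². -/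
/-- For nonzero integers `A, B, C` and `m ∉ {0,1}` with `−mB` not a square,
setting `a = 1−m`, `b = −A²`, `c = −2mC`, `d = A⁴`, `e = −(A⁶ + mC² + B)`, the Markoff-type
K3 equation agrees with the normal form `a x²y²z² + b(x²y²+x²z²+y²z²) + c xyz + d(x²+y²+z²) + e`,
and the non-degeneracy conditions `c ≠ 0`, `ad ≠ b²`, `be ≠ d²` hold. -/
theorem stmt2 (A B C m : ℤ) (hA : A ≠ 0) (hB : B ≠ 0) (hC : C ≠ 0)
    (hm0 : m ≠ 0) (hm1 : m ≠ 1) (hsq : ∀ n : ℤ, -(m * B) ≠ n ^ 2)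
    (a b c d e : ℤ) (ha : a = 1 - m) (hb : b = -A ^ 2) (hc : c = -(2 * m * C))
    (hd : d = A ^ 4) (he : e = -(A ^ 6 + m * C ^ 2 + B)) :
    (∀ x y z : ℤ,
      (x ^ 2 - A ^ 2) * (y ^ 2 - A ^ 2) * (z ^ 2 - A ^ 2) - m * (x * y * z + C) ^ 2 - B =
        a * x ^ 2 * y ^ 2 * z ^ 2 + b * (x ^ 2 * y ^ 2 + x ^ 2 * z ^ 2 + y ^ 2 * z ^ 2) +
          c * (x * y * z) + d * (x ^ 2 + y ^ 2 + z ^ 2) + e) ∧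
    c ≠ 0 ∧ a * d ≠ b ^ 2 ∧ b * e ≠ d ^ 2 := by
  subst ha hb hc hd he
  refine ⟨fun x y z => by ring, ?_, ?_, ?_⟩
  · exact neg_ne_zero.mpr (mul_ne_zero (mul_ne_zero two_ne_zero hm0) hC)
  · intro h
    have h1 : m * A ^ 4 = 0 := by linear_combination -h
    exact mul_ne_zero hm0 (pow_ne_zero 4 hA) h1
  · intro h
    have h1 : A ^ 2 * (m * C ^ 2 + B) = 0 := by linear_combination h
    have h2 := (mul_eq_zero.mp h1).resolve_left (pow_ne_zero 2 hA)
    exact hsq (m * C) (by linear_combination -m * h2)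
end

section
/- Let P = 2³·3·5·7·11·13·31·433·2017·3253·8501·32687·46649·4057231, and let k be an integer with k > 0 and k ≡ 1 (mod P). Then: (i) there exist real numbers x, y, z with (x²−36)(y²−36)(z²−36) + 468·(xyz−4330)² = k; and (ii) for every prime number p there exist p-adic integers x, y, z ∈ ℤ_p with (x²−36)(y²−36)(z²−36) + 468·(xyz−4330)² = k. -/
open Polynomial in
theorem aux_stepanov (p : ℕ) [Fact p.Prime] (hp : 17 ≤ p) (f : (ZMod p)[X])
    (hdeg : f.natDegree ≤ 4) (hf : ∀ z, (f.eval z) ^ ((p - 1) / 2) = -1) :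
    f ∣ (derivative f) ^ 2 := by
  have hpp : p.Prime := Fact.out
  have hodd : p % 2 = 1 := by
    rcases hpp.eq_two_or_odd with h | h <;> omega
  set m := (p - 1) / 2 with hm
  have hm2 : 2 * m + 1 = p := by omega
  have hmF : (2 : ZMod p) * (m : ZMod p) = -1 := by
    have : ((2 * m + 1 : ℕ) : ZMod p) = 0 := by rw [hm2]; simp
    push_cast at this
    linear_combination this
  have hmP : (2 : (ZMod p)[X]) * C (m : ZMod p) = -1 := by
    have := congrArg (C : ZMod p → (ZMod p)[X]) hmF
    rw [C_mul, C_neg, C_1, map_ofNat] at this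
    exact this
  set w : (ZMod p)[X] := X ^ p - X with hw
  have hwdeg : w.natDegree = p := FiniteField.X_pow_card_sub_X_natDegree_eq _ hpp.one_lt
  have hw0 : w ≠ 0 := FiniteField.X_pow_card_sub_X_ne_zero _ hpp.one_lt
  have hwm : w.Monic := by
    rw [hw]; exact monic_X_pow_sub (by rw [degree_X]; exact_mod_cast hpp.one_lt)
  have hw' : derivative w = -1 := by
    rw [hw, derivative_sub, derivative_X_pow, derivative_X]; simp
  have hdvd : w ∣ f ^ m + 1 := by
    rw [← modByMonic_eq_zero_iff_dvd hwm]
    apply eq_zero_of_natDegree_lt_card_of_eval_eq_zero' _ (Finset.univ : Finset (ZMod p))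
    · intro z _
      have h1 := congrArg (eval z) (modByMonic_add_div (f ^ m + 1) w)
      have h2 : eval z w = 0 := by simp [hw]
      simp only [eval_add, eval_mul, h2, zero_mul, add_zero, eval_pow, hf z, eval_one] at h1
      rw [h1]; ring
    · rw [Finset.card_univ, ZMod.card]
      have := natDegree_modByMonic_lt (f ^ m + 1) hwm (by
        intro h; rw [h] at hwdeg; simp at hwdeg; omega)
      omega
  obtain ⟨g, hg⟩ := hdvd
  have hgdeg : g.natDegree ≤ p - 2 := by
    by_cases hg0 : g = 0
    · simp [hg0]
    have h1 : (w * g).natDegree = p + g.natDegree := by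
      rw [natDegree_mul hw0 hg0, hwdeg]
    have h2 : (f ^ m + 1).natDegree ≤ 4 * m := by
      refine (natDegree_add_le _ _).trans ?_
      simp only [natDegree_one, max_le_iff, Nat.zero_le, and_true]
      refine natDegree_pow_le.trans ?_
      nlinarith
    rw [hg, h1] at h2
    omega
  have hfm : f ^ m = w * g - 1 := by rw [← hg]; ring
  -- first derivative relation
  have hder : 2 * f * derivative (w * g - 1) = - derivative f * (w * g - 1) := by
    rw [← hfm, derivative_pow]
    have : f * f ^ (m - 1) = f ^ m := by
      rw [← pow_succ']; congr 1; omega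
    linear_combination (derivative f * f ^ m) * hmP + (2 * C (m : ZMod p) * derivative f) * this
  have hder1 : derivative (w * g - 1) = -g + w * derivative g := by
    rw [derivative_sub, derivative_mul, hw']; simp
  rw [hder1] at hder
  set h := 2 * f * derivative g + derivative f * g with hh
  have e1 : 2 * f * g + derivative f = w * h := by
    rw [hh]; linear_combination -hder
  have hf'deg : (derivative f).natDegree ≤ 3 :=
    (natDegree_derivative_le f).trans (by omega)
  have hf''deg : (derivative (derivative f)).natDegree ≤ 2 :=
    (natDegree_derivative_le _).trans (by omega)
  have hhdeg : h.natDegree ≤ 2 := by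
    by_cases hh0 : h = 0
    · simp [hh0]
    have h1 : (w * h).natDegree = p + h.natDegree := by
      rw [natDegree_mul hw0 hh0, hwdeg]
    have h2 : (2 * f * g + derivative f).natDegree ≤ p + 2 := by
      refine (natDegree_add_le _ _).trans (max_le ?_ (by omega))
      refine natDegree_mul_le.trans ?_
      have : (2 * f).natDegree ≤ 4 := by
        refine natDegree_mul_le.trans ?_
        have : (2 : (ZMod p)[X]).natDegree = 0 := natDegree_ofNat 2
        omega
      omega
    rw [e1, h1] at h2
    omega
  have e2 : 2 * derivative f * g + 2 * f * derivative g + derivative (derivative f)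
      = -h + w * derivative h := by
    have := congrArg derivative e1
    simp only [derivative_add, derivative_mul, hw', derivative_ofNat] at this
    linear_combination this
  have e3 : 2 * f * derivative (derivative f) + 4 * f * h - derivative f ^ 2
      = w * (2 * f * derivative h - derivative f * h) := by
    linear_combination 2 * f * e2 - derivative f * e1 + 2 * f * hh
  have hz : 2 * f * derivative (derivative f) + 4 * f * h - derivative f ^ 2 = 0 := by
    apply eq_zero_of_dvd_of_natDegree_lt (p := w) ⟨_, e3⟩
    rw [hwdeg]
    have n2 : (2 : (ZMod p)[X]).natDegree = 0 := natDegree_ofNat 2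
    have n4 : (4 : (ZMod p)[X]).natDegree = 0 := natDegree_ofNat 4
    have a1 : (2 * f).natDegree ≤ 4 := natDegree_mul_le.trans (by omega)
    have a2 : (4 * f).natDegree ≤ 4 := natDegree_mul_le.trans (by omega)
    have a3 : (2 * f * derivative (derivative f)).natDegree ≤ 6 := natDegree_mul_le.trans (by omega)
    have a4 : (4 * f * h).natDegree ≤ 6 := natDegree_mul_le.trans (by omega)
    have a5 : (derivative f ^ 2).natDegree ≤ 6 := natDegree_pow_le.trans (by omega)
    have a6 := (natDegree_add_le (2 * f * derivative (derivative f)) (4 * f * h)).trans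
      (max_le a3 a4)
    have a7 := (natDegree_sub_le _ _).trans (max_le a6 a5)
    omega
  exact ⟨2 * derivative (derivative f) + 4 * h, by linear_combination -hz⟩

open Polynomial in
theorem aux_quartic (p : ℕ) [Fact p.Prime] (hp : 17 ≤ p) (α β γ : ZMod p)
    (hα : α ≠ 0) (h2 : (2 : ZMod p) ≠ 0) (hΔ : β ^ 2 - 4 * α * γ ≠ 0) :
    ∃ z, IsSquare (α * z ^ 4 + β * z ^ 2 + γ) := by
  by_contra hcon
  push Not at hcon
  set f : (ZMod p)[X] := C α * X ^ 4 + C β * X ^ 2 + C γ with hf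
  have hdeg : f.natDegree = 4 := by rw [hf]; compute_degree!
  have hp2 : p / 2 = (p - 1) / 2 := by
    rcases (Fact.out : p.Prime).eq_two_or_odd with h | h <;> omega
  have hev : ∀ z, f.eval z = α * z ^ 4 + β * z ^ 2 + γ := by intro z; simp [hf]
  have key := aux_stepanov p hp f hdeg.le (by
    intro z
    have h1 := hcon z
    rw [← hev] at h1
    have h0 : f.eval z ≠ 0 := by
      intro h; rw [h] at h1; exact h1 (IsSquare.zero)
    rw [ZMod.euler_criterion p h0] at h1
    have := ZMod.pow_div_two_eq_neg_one_or_one p h0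
    rw [← hp2]
    tauto)
  have hd : derivative f = C (2 : ZMod p) * X * (C 2 * C α * X ^ 2 + C β) := by
    rw [hf]
    simp only [derivative_add, derivative_C_mul, derivative_X_pow, derivative_C, map_ofNat,
      Nat.cast_ofNat]
    ring
  have hdvd : f ∣ C (4 * (β ^ 2 - 4 * α * γ)) * X ^ 2 := by
    have : C (4 * (β ^ 2 - 4 * α * γ)) * X ^ 2 = derivative f ^ 2 - f * (16 * C α * X ^ 2) := by
      rw [hd, hf]; simp only [map_mul, map_sub, map_pow, map_ofNat]; ring
    rw [this]
    exact dvd_sub key (dvd_mul_right _ _)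
  have hc : (4 * (β ^ 2 - 4 * α * γ)) ≠ 0 :=
    mul_ne_zero (by intro h; apply h2; have : (2 : ZMod p) * 2 = 0 := by linear_combination h
                    simpa using this) hΔ
  have h0 := eq_zero_of_dvd_of_natDegree_lt hdvd (by
    rw [hdeg, natDegree_C_mul_X_pow _ _ hc]; norm_num)
  exact mul_ne_zero (C_ne_zero.mpr hc) (pow_ne_zero 2 X_ne_zero) h0

open Polynomial in
theorem aux_nonroot (p : ℕ) [Fact p.Prime] (hp : 17 ≤ p) (Q : (ZMod p)[X])
    (hQ : Q ≠ 0) (hd : Q.natDegree ≤ 15) : ∃ y, Q.eval y ≠ 0 := by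
  by_contra hcon
  push Not at hcon
  apply hQ
  apply eq_zero_of_natDegree_lt_card_of_eval_eq_zero' _ (Finset.univ : Finset (ZMod p))
  · intro z _; exact hcon z
  · rw [Finset.card_univ, ZMod.card]; omega

theorem aux_ne (p : ℕ) [Fact p.Prime] (n : ℕ) (hn : 0 < n) (h : n < p) : (n : ZMod p) ≠ 0 := by
  rw [Ne, ZMod.natCast_eq_zero_iff]
  exact fun h1 => absurd (Nat.le_of_dvd hn h1) (by omega)

open Polynomial in
theorem aux_generic (p : ℕ) [Fact p.Prime] (hp : 17 ≤ p) (κ : ZMod p) (hκ : κ ≠ 0)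
    (h433 : (433 : ZMod p) ≠ 0) :
    ∃ x y z : ZMod p,
      (x ^ 2 - 36) * (y ^ 2 - 36) * (z ^ 2 - 36) + 468 * (x * y * z - 4330) ^ 2 = κ ∧
      (2 * x * (y ^ 2 - 36) * (z ^ 2 - 36) + 936 * (y * z) * (x * y * z - 4330) ≠ 0 ∨
       2 * z * (x ^ 2 - 36) * (y ^ 2 - 36) + 936 * (x * y) * (x * y * z - 4330) ≠ 0) := by
  have h2 : (2 : ZMod p) ≠ 0 := by exact_mod_cast aux_ne p 2 (by norm_num) (by omega)
  have h3 : (3 : ZMod p) ≠ 0 := by exact_mod_cast aux_ne p 3 (by norm_num) (by omega)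
  have h5 : (5 : ZMod p) ≠ 0 := by exact_mod_cast aux_ne p 5 (by norm_num) (by omega)
  have h13 : (13 : ZMod p) ≠ 0 := by exact_mod_cast aux_ne p 13 (by norm_num) (by omega)
  have h36 : (36 : ZMod p) ≠ 0 := by
    rw [show (36 : ZMod p) = 2 ^ 2 * 3 ^ 2 by norm_num]; simp [h2, h3]
  have h468 : (468 : ZMod p) ≠ 0 := by
    rw [show (468 : ZMod p) = 2 ^ 2 * 3 ^ 2 * 13 by norm_num]; simp [h2, h3, h13]
  have h4330 : (4330 : ZMod p) ≠ 0 := by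
    rw [show (4330 : ZMod p) = 2 * 5 * 433 by norm_num]; simp [h2, h5, h433]
  set c := 468 * 4330 ^ 2 - κ with hc
  set Q4 : (ZMod p)[X] := C 1296 * (X ^ 2 - C 36) + C c with hQ4
  set Q5 : (ZMod p)[X] := (C 468 * X ^ 2 * (C κ - C 1296 * (X ^ 2 - C 36)) - (X ^ 2 - C 36) * C c
      - C 2592 * (X ^ 2 - C 36) ^ 2) ^ 2
      - C 4 * (C 36 * (X ^ 2 - C 36) * (C 469 * X ^ 2 - C 36)) *
        (C 36 * (X ^ 2 - C 36) * Q4) with hQ5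
  obtain ⟨y, hy⟩ := aux_nonroot p hp (X * (X ^ 2 - C 36) * (C 469 * X ^ 2 - C 36) * Q4 * Q5)
    (by
      refine mul_ne_zero (mul_ne_zero (mul_ne_zero (mul_ne_zero X_ne_zero ?_) ?_) ?_) ?_
      · intro h
        have := congrArg (eval 0) h
        simp at this
        exact h36 this
      · intro h
        have := congrArg (eval 0) h
        simp at this
        exact h36 this
      · intro h
        have e0 := congrArg (eval 0) h
        have e6 := congrArg (eval 6) h
        simp only [hQ4, eval_add, eval_mul, eval_sub, eval_pow, eval_X, eval_C, eval_zero] at e0 e6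
        have : (36 : ZMod p) ^ 3 = 0 := by linear_combination e6 - e0
        exact pow_ne_zero 3 h36 this
      · intro h
        have e6 := congrArg (eval 6) h
        simp only [hQ5, hQ4, eval_add, eval_mul, eval_sub, eval_pow, eval_X, eval_C,
          eval_zero] at e6
        have : (468 * 36 * κ) ^ 2 = 0 := by linear_combination e6
        exact pow_ne_zero 2 (mul_ne_zero (mul_ne_zero h468 h36) hκ) this)
    (by rw [hQ5, hQ4]; compute_degree)
  simp only [hQ5, hQ4, eval_add, eval_mul, eval_sub, eval_pow, eval_X, eval_C, mul_ne_zero_iff]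
    at hy
  obtain ⟨⟨⟨⟨hy0, hb⟩, hy3⟩, hy4⟩, hy5⟩ := hy
  obtain ⟨b, hbd⟩ : ∃ b, b = y ^ 2 - 36 := ⟨_, rfl⟩
  rw [← hbd] at hb hy4 hy5
  obtain ⟨α, hα⟩ : ∃ α, α = 36 * b * (469 * y ^ 2 - 36) := ⟨_, rfl⟩
  obtain ⟨β, hβ⟩ : ∃ β, β = 468 * y ^ 2 * (κ - 1296 * b) - b * c - 2592 * b ^ 2 := ⟨_, rfl⟩
  obtain ⟨γ, hγ⟩ : ∃ γ, γ = 36 * b * (1296 * b + c) := ⟨_, rfl⟩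
  have hα0 : α ≠ 0 := by rw [hα]; exact mul_ne_zero (mul_ne_zero h36 hb) hy3
  have hγ0 : γ ≠ 0 := by rw [hγ]; exact mul_ne_zero (mul_ne_zero h36 hb) hy4
  have hΔ : β ^ 2 - 4 * α * γ ≠ 0 := by rw [hα, hβ, hγ]; exact hy5
  obtain ⟨z, s, hs⟩ := aux_quartic p hp α β γ hα0 h2 hΔ
  obtain ⟨L, hL⟩ : ∃ L, L = b * (z ^ 2 - 36) + 468 * y ^ 2 * z ^ 2 := ⟨_, rfl⟩
  obtain ⟨N, hN⟩ : ∃ N, N = c - 36 * b * (z ^ 2 - 36) := ⟨_, rfl⟩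
  have hD : α * z ^ 4 + β * z ^ 2 + γ = (468 * 4330 * (y * z)) ^ 2 - L * N := by
    rw [hα, hβ, hγ, hL, hN, hbd, hc]; ring
  have hx : ∃ x, L * x ^ 2 - 2 * 468 * 4330 * (y * z) * x + N = 0 := by
    by_cases hL0 : L = 0
    · have hz : z ≠ 0 := by
        intro hz
        rw [hz] at hL
        have : b * 36 = 0 := by linear_combination hL - hL0
        exact mul_ne_zero hb h36 this
      have hM : 2 * 468 * 4330 * (y * z) ≠ 0 :=
        mul_ne_zero (mul_ne_zero (mul_ne_zero h2 h468) h4330) (mul_ne_zero hy0 hz)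
      refine ⟨N / (2 * 468 * 4330 * (y * z)), ?_⟩
      rw [mul_div_cancel₀ _ hM, hL0]; ring
    · refine ⟨(468 * 4330 * (y * z) + s) / L, ?_⟩
      field_simp
      linear_combination hD - hs
  obtain ⟨x, hx⟩ := hx
  have hG : (x ^ 2 - 36) * (y ^ 2 - 36) * (z ^ 2 - 36) + 468 * (x * y * z - 4330) ^ 2 = κ := by
    rw [hL, hN, hbd, hc] at hx
    linear_combination hx
  refine ⟨x, y, z, hG, ?_⟩
  by_contra hcon
  push Not at hcon
  obtain ⟨hGx, hGz⟩ := hcon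
  have hx1 : 2 * L * x - 2 * 468 * 4330 * (y * z) = 0 := by
    rw [hL, hbd]; linear_combination hGx
  have f0 : 4 * (α * z ^ 4 + β * z ^ 2 + γ) = 0 := by
    rw [hD]
    linear_combination (-(2 * L * x - 2 * 468 * 4330 * (y * z)) + 4 * L * x
      - 4 * 468 * 4330 * (y * z)) * hx1 - 4 * L * hx
  have f1 : 4 * (4 * α * z ^ 3 + 2 * β * z) = 0 := by
    have : 4 * (4 * α * z ^ 3 + 2 * β * z)
      = 2 * (2 * L * x - 2 * 468 * 4330 * (y * z)) *
          (2 * (2 * z * b + 936 * y ^ 2 * z) * x - 2 * 468 * 4330 * y)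
        - 4 * (2 * z * b + 936 * y ^ 2 * z) * (L * x ^ 2 - 2 * 468 * 4330 * (y * z) * x + N)
        - 4 * L * (2 * z * (x ^ 2 - 36) * (y ^ 2 - 36) + 936 * (x * y) * (x * y * z - 4330)) := by
      rw [hα, hβ, hL, hN, hbd, hc]; ring
    rw [this, hx1, hx, hGz]; ring
  have h4 : (4 : ZMod p) ≠ 0 := by
    rw [show (4 : ZMod p) = 2 ^ 2 by norm_num]; simp [h2]
  have f0' := (mul_eq_zero.mp f0).resolve_left h4
  have f1' := (mul_eq_zero.mp f1).resolve_left h4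
  have f2 : 2 * z * (2 * α * z ^ 2 + β) = 0 := by linear_combination f1'
  rcases mul_eq_zero.mp f2 with h | h
  · have hz := (mul_eq_zero.mp h).resolve_left h2
    rw [hz] at f0'
    exact hγ0 (by linear_combination f0')
  · exact hΔ (by linear_combination (2 * α * z ^ 2 + β) * h - 4 * α * f0')

open Polynomial in
theorem aux_zero (p : ℕ) [Fact p.Prime] (hp : 17 ≤ p) :
    ∃ x y z : ZMod p,
      (x ^ 2 - 36) * (y ^ 2 - 36) * (z ^ 2 - 36) + 468 * (x * y * z - 4330) ^ 2 = 0 ∧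
      2 * x * (y ^ 2 - 36) * (z ^ 2 - 36) + 936 * (y * z) * (x * y * z - 4330) ≠ 0 := by
  have h2 : (2 : ZMod p) ≠ 0 := by exact_mod_cast aux_ne p 2 (by norm_num) (by omega)
  have h3 : (3 : ZMod p) ≠ 0 := by exact_mod_cast aux_ne p 3 (by norm_num) (by omega)
  have h36 : (36 : ZMod p) ≠ 0 := by
    rw [show (36 : ZMod p) = 2 ^ 2 * 3 ^ 2 by norm_num]; simp [h2, h3]
  have h324 : (324 : ZMod p) ≠ 0 := by
    rw [show (324 : ZMod p) = 2 ^ 2 * 3 ^ 4 by norm_num]; simp [h2, h3]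
  have h12 : (12 : ZMod p) ≠ 0 := by
    rw [show (12 : ZMod p) = 2 ^ 2 * 3 by norm_num]; simp [h2, h3]
  obtain ⟨y, hy⟩ := aux_nonroot p hp (X * (X ^ 2 - C 36) * (C (2165 ^ 2) - C 324 * X ^ 2))
    (by
      refine mul_ne_zero (mul_ne_zero X_ne_zero ?_) ?_
      · intro h
        have := congrArg (eval 0) h
        simp at this
        exact h36 this
      · intro h
        have e0 := congrArg (eval 0) h
        have e6 := congrArg (eval 1) h
        simp only [eval_mul, eval_sub, eval_pow, eval_X, eval_C, eval_zero] at e0 e6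
        exact h324 (by linear_combination e0 - e6))
    (by compute_degree; norm_num)
  simp only [eval_mul, eval_sub, eval_pow, eval_X, eval_C, mul_ne_zero_iff] at hy
  obtain ⟨⟨hy0, hb⟩, hy3⟩ := hy
  obtain ⟨z, hz⟩ : ∃ z, z = 2165 / (3 * y) := ⟨_, rfl⟩
  have hz1 : 3 * y * z = 2165 := by rw [hz]; field_simp
  have hz2 : z ^ 2 - 36 ≠ 0 := by
    intro h
    apply hy3
    linear_combination (-(3 * y * z) - 2165) * hz1 + 9 * y ^ 2 * h
  refine ⟨6, y, z, by linear_combination (468 * (4 * 3 * y * z - 8660)) * hz1, ?_⟩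
  have : (2 : ZMod p) * 6 * (y ^ 2 - 36) * (z ^ 2 - 36) + 936 * (y * z) * (6 * y * z - 4330)
    = 12 * (y ^ 2 - 36) * (z ^ 2 - 36) := by linear_combination 936 * 2 * y * z * hz1
  rw [this]
  exact mul_ne_zero (mul_ne_zero h12 hb) hz2

open Polynomial in
theorem aux_hensel (p : ℕ) [Fact p.Prime] (k x y z : ℤ_[p])
    (h : ‖(x ^ 2 - 36) * (y ^ 2 - 36) * (z ^ 2 - 36) + 468 * (x * y * z - 4330) ^ 2 - k‖
      < ‖2 * x * (y ^ 2 - 36) * (z ^ 2 - 36) + 936 * (y * z) * (x * y * z - 4330)‖ ^ 2) :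
    ∃ x y z : ℤ_[p],
      (x ^ 2 - 36) * (y ^ 2 - 36) * (z ^ 2 - 36) + 468 * (x * y * z - 4330) ^ 2 = k := by
  set F : ℤ_[p][X] := (X ^ 2 - C 36) * C (y ^ 2 - 36) * C (z ^ 2 - 36)
    + C 468 * (X * C y * C z - C 4330) ^ 2 - C k with hF
  have e1 : ∀ t, F.aeval t = (t ^ 2 - 36) * (y ^ 2 - 36) * (z ^ 2 - 36)
      + 468 * (t * y * z - 4330) ^ 2 - k := by
    intro t
    rw [coe_aeval_eq_eval]
    simp only [hF, eval_add, eval_mul, eval_sub, eval_pow, eval_X, eval_C]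
  have e2 : F.derivative.aeval x = 2 * x * (y ^ 2 - 36) * (z ^ 2 - 36)
      + 936 * (y * z) * (x * y * z - 4330) := by
    rw [coe_aeval_eq_eval]
    simp only [hF, derivative_add, derivative_sub, derivative_mul, derivative_C, derivative_X_pow,
      derivative_pow, derivative_X, eval_add, eval_mul, eval_sub, eval_pow, eval_X, eval_C,
      eval_zero, eval_one]
    push_cast
    ring
  obtain ⟨t, ht, -⟩ := hensels_lemma (F := F) (a := x) (by rw [e1, e2]; exact h)
  rw [e1] at ht
  exact ⟨t, y, z, by linear_combination ht⟩

theorem aux_lift (p : ℕ) [Fact p.Prime] (k : ℤ) (x y z : ZMod p)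
    (h : (x ^ 2 - 36) * (y ^ 2 - 36) * (z ^ 2 - 36) + 468 * (x * y * z - 4330) ^ 2 = (k : ZMod p))
    (h' : 2 * x * (y ^ 2 - 36) * (z ^ 2 - 36) + 936 * (y * z) * (x * y * z - 4330) ≠ 0) :
    ∃ x y z : ℤ_[p],
      (x ^ 2 - 36) * (y ^ 2 - 36) * (z ^ 2 - 36) + 468 * (x * y * z - 4330) ^ 2 = (k : ℤ_[p]) := by
  have key : ∀ u : ℤ_[p], ‖u‖ < 1 ↔ PadicInt.toZMod u = 0 := by
    intro u
    rw [← RingHom.mem_ker, PadicInt.ker_toZMod, IsLocalRing.mem_maximalIdeal,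
      PadicInt.mem_nonunits]
  obtain ⟨x, rfl⟩ := ZMod.ringHom_surjective (PadicInt.toZMod (p := p)) x
  obtain ⟨y, rfl⟩ := ZMod.ringHom_surjective (PadicInt.toZMod (p := p)) y
  obtain ⟨z, rfl⟩ := ZMod.ringHom_surjective (PadicInt.toZMod (p := p)) z
  apply aux_hensel p k x y z
  have n2 : ‖2 * x * (y ^ 2 - 36) * (z ^ 2 - 36) + 936 * (y * z) * (x * y * z - 4330)‖ = 1 := by
    refine le_antisymm (PadicInt.norm_le_one _) ?_
    rw [← not_lt, key]
    simpa only [map_add, map_sub, map_mul, map_pow, map_ofNat] using h'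
  rw [n2, one_pow, key]
  simp only [map_add, map_sub, map_mul, map_pow, map_ofNat, map_intCast]
  rw [h, sub_self]

theorem aux_int (p : ℕ) [Fact p.Prime] (k x y z : ℤ) (hk : (k : ZMod p) = 1)
    (h : (p : ℤ) ∣ (x ^ 2 - 36) * (y ^ 2 - 36) * (z ^ 2 - 36) + 468 * (x * y * z - 4330) ^ 2 - 1)
    (h' : ¬ (p : ℤ) ∣
      2 * x * (y ^ 2 - 36) * (z ^ 2 - 36) + 936 * (y * z) * (x * y * z - 4330)) :
    ∃ x y z : ℤ_[p],
      (x ^ 2 - 36) * (y ^ 2 - 36) * (z ^ 2 - 36) + 468 * (x * y * z - 4330) ^ 2 = (k : ℤ_[p]) := by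
  rw [← ZMod.intCast_zmod_eq_zero_iff_dvd] at h h'
  push_cast at h h'
  exact aux_lift p k x y z (by rw [hk]; linear_combination h) h'

theorem aux_two (k : ℤ) (hk : (8 : ℤ) ∣ k - 1) : ∃ x y z : ℤ_[2],
      (x ^ 2 - 36) * (y ^ 2 - 36) * (z ^ 2 - 36) + 468 * (x * y * z - 4330) ^ 2 = (k : ℤ_[2]) := by
  apply aux_hensel 2 k 1 1 1
  have n1 : ‖((1 : ℤ_[2]) ^ 2 - 36) * (1 ^ 2 - 36) * (1 ^ 2 - 36)
      + 468 * (1 * 1 * 1 - 4330) ^ 2 - k‖ ≤ 1 / 8 := by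
    have e : ((1 : ℤ_[2]) ^ 2 - 36) * (1 ^ 2 - 36) * (1 ^ 2 - 36)
      + 468 * (1 * 1 * 1 - 4330) ^ 2 - k = ((-35 ^ 3 + 468 * 4329 ^ 2 - k : ℤ) : ℤ_[2]) := by
      push_cast; ring
    rw [e]
    have := (PadicInt.norm_int_le_pow_iff_dvd (p := 2) (k := -35 ^ 3 + 468 * 4329 ^ 2 - k) (n := 3)).mpr
      (by norm_num; omega)
    norm_num at this ⊢
    exact this
  have n2 : ‖2 * (1 : ℤ_[2]) * (1 ^ 2 - 36) * (1 ^ 2 - 36) + 936 * (1 * 1) * (1 * 1 * 1 - 4330)‖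
      = 1 / 2 := by
    have e : 2 * (1 : ℤ_[2]) * (1 ^ 2 - 36) * (1 ^ 2 - 36) + 936 * (1 * 1) * (1 * 1 * 1 - 4330)
      = ((2 : ℕ) : ℤ_[2]) * ((35 ^ 2 - 468 * 4329 : ℤ) : ℤ_[2]) := by
      push_cast; ring
    rw [e, norm_mul, PadicInt.norm_p]
    have : ‖((35 ^ 2 - 468 * 4329 : ℤ) : ℤ_[2])‖ = 1 := by
      refine le_antisymm (PadicInt.norm_le_one _) ?_
      rw [← not_lt, PadicInt.norm_int_lt_one_iff_dvd]
      norm_num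
    rw [this]; norm_num
  rw [n2]
  refine n1.trans_lt (by norm_num)

/-- Proposition 5.1. For a positive integer `k ≡ 1 (mod P)`, the affine
Markoff-type K3 equation `(x²−36)(y²−36)(z²−36) + 468(xyz−4330)² = k` has a real solution and
a solution in the `p`-adic integers for every prime `p`. -/
theorem stmt3 (k : ℤ) (hk : 0 < k)
    (hmod : k ≡ 1 [ZMOD (2 ^ 3 * 3 * 5 * 7 * 11 * 13 * 31 * 433 * 2017 * 3253 * 8501 *
      32687 * 46649 * 4057231)]) :
    (∃ x y z : ℝ,
      (x ^ 2 - 36) * (y ^ 2 - 36) * (z ^ 2 - 36) + 468 * (x * y * z - 4330) ^ 2 = (k : ℝ)) ∧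
    (∀ (p : ℕ) [Fact p.Prime], ∃ x y z : ℤ_[p],
      (x ^ 2 - 36) * (y ^ 2 - 36) * (z ^ 2 - 36) + 468 * (x * y * z - 4330) ^ 2 = (k : ℤ_[p])) := by
  have hk1 := hmod.symm.dvd
  constructor
  · refine ⟨6, (4330 + Real.sqrt (k / 468)) / 6, 1, ?_⟩
    have h0 : (0 : ℝ) ≤ (k : ℝ) / 468 := by positivity
    have := Real.sq_sqrt h0
    linear_combination 468 * this
  · intro p hp
    have hpp : p.Prime := hp.out
    have hone : ∀ q : ℤ, q ∣ (2 ^ 3 * 3 * 5 * 7 * 11 * 13 * 31 * 433 * 2017 * 3253 * 8501 *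
      32687 * 46649 * 4057231) → q = (p : ℤ) → (k : ZMod p) = 1 := by
      intro q hq hqp
      have h1 : (p : ℤ) ∣ k - 1 := hqp ▸ hq.trans hk1
      have h2 := (ZMod.intCast_zmod_eq_zero_iff_dvd (k - 1) p).mpr h1
      push_cast at h2
      linear_combination h2
    by_cases h433 : p = 433
    · subst h433
      have h1 := hone 433 (by norm_num) (by norm_num)
      exact aux_int 433 k 1 0 76 h1 (by norm_num) (by norm_num)
    by_cases h17 : 17 ≤ p
    · by_cases hk0 : (k : ZMod p) = 0
      · obtain ⟨x, y, z, h, h'⟩ := aux_zero p h17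
        exact aux_lift p k x y z (by rw [h, hk0]) h'
      · obtain ⟨x, y, z, h, h'⟩ := aux_generic p h17 k hk0 (by
          have : ((433 : ℕ) : ZMod p) ≠ 0 := by
            rw [Ne, ZMod.natCast_eq_zero_iff, Nat.prime_dvd_prime_iff_eq hpp (by norm_num)]
            exact h433
          exact_mod_cast this)
        rcases h' with h' | h'
        · exact aux_lift p k x y z h h'
        · exact aux_lift p k z x y (by rw [← h]; ring) (by convert h' using 1; ring)
    · push Not at h17
      interval_cases p
      all_goals first
        | (exfalso; revert hpp; norm_num; done)
        | skip
      · exact aux_two k (Dvd.dvd.trans (by norm_num) hk1)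
      · have h1 := hone 3 (by norm_num) (by norm_num)
        exact aux_int 3 k 1 1 1 h1 (by norm_num) (by norm_num)
      · have h1 := hone 5 (by norm_num) (by norm_num)
        exact aux_int 5 k 2 0 2 h1 (by norm_num) (by norm_num)
      · have h1 := hone 7 (by norm_num) (by norm_num)
        exact aux_int 7 k 2 0 0 h1 (by norm_num) (by norm_num)
      · have h1 := hone 11 (by norm_num) (by norm_num)
        exact aux_int 11 k 0 2 3 h1 (by norm_num) (by norm_num)
      · have h1 := hone 13 (by norm_num) (by norm_num)
        exact aux_int 13 k 1 0 3 h1 (by norm_num) (by norm_num)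
end

section
/- Let p ≥ 11 be a prime number and let k be an integer such that p divides neither k − 8774485200 nor k − 8774438544. Then there exist x, y in the field 𝔽_p = ℤ/pℤ with −36·(x²−36)·(y²−36) = k − 8774485200 in 𝔽_p, and moreover one can choose such (x, y) to be a smooth point of the affine curve, i.e. with x·(y²−36) ≠ 0 or y·(x²−36) ≠ 0 in 𝔽_p. -/
section aux
variable {F : Type*} [Field F] [Fintype F] [DecidableEq F]

lemma aux_sum (hF : ringChar F ≠ 2) {a b : F} (hab : a ≠ b) :
    ∑ x : F, quadraticChar F ((x - a) * (x - b)) = -1 := by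
  have hba : b - a ≠ 0 := sub_ne_zero.mpr hab.symm
  have hJ := jacobiSum_nontrivial_inv (quadraticChar_ne_one hF)
  rw [(quadraticChar_isQuadratic F).inv, jacobiSum] at hJ
  have hbij : Function.Bijective (fun t : F => a + (b - a) * t) :=
    (Equiv.addLeft a).bijective.comp (mulLeft_bijective₀ _ hba)
  rw [← hbij.sum_comp (fun x => quadraticChar F ((x - a) * (x - b)))]
  have h1 : ∀ t : F, quadraticChar F ((a + (b - a) * t - a) * (a + (b - a) * t - b))
      = quadraticChar F (-1) * (quadraticChar F t * quadraticChar F (1 - t)) := by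
    intro t
    have : (a + (b - a) * t - a) * (a + (b - a) * t - b)
        = (b - a) ^ 2 * ((-1) * (t * (1 - t))) := by ring
    rw [this, map_mul, quadraticChar_sq_one' hba, one_mul, map_mul, map_mul]
  simp only [h1]
  rw [← Finset.mul_sum, hJ]
  have h2 := quadraticChar_sq_one (F := F) (a := -1) (by simp)
  linarith [h2, sq (quadraticChar F (-1))]

lemma aux_ge (a : F) : -1 ≤ quadraticChar F a := by
  by_cases h : a = 0
  · simp [h]
  · rcases quadraticChar_dichotomy h with h | h <;> rw [h] <;> norm_num

lemma aux_cubic (hF : ringChar F ≠ 2) {e : F} (he0 : e ≠ 0) (he1 : e ≠ 1)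
    (h : ∀ s : F, IsSquare s → s ≠ 1 → ¬ IsSquare ((s - 1) * (s - e))) (s : F)
    (hs0 : s ≠ 0) (hs1 : s ≠ 1) (hse : s ≠ e) :
    quadraticChar F (s * ((s - 1) * (s - e))) = -1 := by
  have hA := aux_sum hF (a := 1) (b := e) he1.symm
  have hZ := quadraticChar_sum_zero hF
  have hg : ∀ s : F, (1 + quadraticChar F s) * (1 + quadraticChar F ((s - 1) * (s - e)))
      = if s = 1 then 2 else 0 := by
    intro s
    split_ifs with h1
    · subst h1; simp
    · by_cases hsq : IsSquare s
      · rw [quadraticChar_neg_one_iff_not_isSquare.mpr (h s hsq h1)]; ring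
      · rw [quadraticChar_neg_one_iff_not_isSquare.mpr hsq]; ring
  have hsum : ∑ s : F, (1 + quadraticChar F s) * (1 + quadraticChar F ((s - 1) * (s - e))) = 2 := by
    rw [Finset.sum_congr rfl (fun s _ => hg s)]; simp
  have hX : ∑ s : F, (1 + quadraticChar F (s * ((s - 1) * (s - e)))) = 3 := by
    have : ∀ s : F, (1 + quadraticChar F s) * (1 + quadraticChar F ((s - 1) * (s - e)))
      = (1 + quadraticChar F (s * ((s - 1) * (s - e)))) + quadraticChar F s
        + quadraticChar F ((s - 1) * (s - e)) := by
      intro s; rw [map_mul (quadraticChar F) s]; ring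
    simp only [this] at hsum
    rw [Finset.sum_add_distrib, Finset.sum_add_distrib, hA, hZ] at hsum
    linarith
  have hG : ∑ s : F, ((1 + quadraticChar F (s * ((s - 1) * (s - e))))
      - (if s = 0 then 1 else 0) - (if s = 1 then 1 else 0) - (if s = e then 1 else 0)) = 0 := by
    rw [Finset.sum_sub_distrib, Finset.sum_sub_distrib, Finset.sum_sub_distrib, hX]
    simp
  rw [Finset.sum_eq_zero_iff_of_nonneg] at hG
  · have := hG s (Finset.mem_univ _)
    simp only [hs0, hs1, hse, if_false] at this
    linarith
  · intro t _
    by_cases t0 : t = 0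
    · subst t0; simp [he0.symm]
    by_cases t1 : t = 1
    · subst t1; simp [he1.symm]
    by_cases te : t = e
    · subst te; simp [he0, he1]
    simp only [t0, t1, te, if_false]
    linarith [aux_ge (t * ((t - 1) * (t - e)))]

lemma aux_main (hF : ringChar F ≠ 2) (hc : 11 ≤ Fintype.card F) {e : F} (he0 : e ≠ 0)
    (he1 : e ≠ 1) :
    ∃ s : F, IsSquare s ∧ s ≠ 1 ∧ IsSquare ((s - 1) * (s - e)) := by
  by_contra hcon
  have h : ∀ s : F, IsSquare s → s ≠ 1 → ¬ IsSquare ((s - 1) * (s - e)) := by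
    intro s a b c; exact hcon ⟨s, a, b, c⟩
  have hens : ¬ IsSquare e := fun hh => h e hh he1 (by simp)
  have key : ∀ s : F, s ≠ 0 → s ≠ 1 → s ≠ e → s ≠ 1 + e →
      quadraticChar F (s * (1 + e - s)) = 1 := by
    intro s hs0 hs1 hse hs2
    have k1 := aux_cubic hF he0 he1 h s hs0 hs1 hse
    have d1 : s - 1 ≠ 0 := sub_ne_zero.mpr hs1
    have de : s - e ≠ 0 := sub_ne_zero.mpr hse
    have d2 : 1 + e - s ≠ 0 := sub_ne_zero.mpr hs2.symm
    have de1 : 1 - e ≠ 0 := sub_ne_zero.mpr he1.symm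
    have k2 := aux_cubic hF he0 he1 h ((s - 1) / (s - e)) (div_ne_zero d1 de)
      (by rw [Ne, div_eq_one_iff_eq de]; intro hh; apply de1; linear_combination -hh)
      (by
        rw [Ne, div_eq_iff de]; intro hh
        exact mul_ne_zero de1 d2 (by linear_combination -hh))
    have e1 : (s - 1) / (s - e) * (((s - 1) / (s - e) - 1) * ((s - 1) / (s - e) - e))
        = ((1 - e) / (s - e) ^ 2) ^ 2 * ((s - 1) * (s - e) * (1 + e - s)) := by
      field_simp
      ring
    rw [e1, map_mul, quadraticChar_sq_one' (div_ne_zero de1 (pow_ne_zero 2 de)), one_mul] at k2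
    have e2 : (s * ((s - 1) * (s - e))) * ((s - 1) * (s - e) * (1 + e - s))
        = ((s - 1) * (s - e)) ^ 2 * (s * (1 + e - s)) := by ring
    have k3 := congrArg (quadraticChar F) e2
    rw [map_mul, k1, k2, map_mul, quadraticChar_sq_one' (mul_ne_zero d1 de)] at k3
    linarith
  have hlow : ∑ s : F, (1 - 2 * (if s ∈ ({0, 1, e, 1 + e} : Finset F) then (1 : ℤ) else 0))
      ≤ ∑ s : F, quadraticChar F (s * (1 + e - s)) := by
    apply Finset.sum_le_sum
    intro s _
    split_ifs with hs
    · linarith [aux_ge (s * (1 + e - s))]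
    · simp only [Finset.mem_insert, Finset.mem_singleton, not_or] at hs
      rw [key s hs.1 hs.2.1 hs.2.2.1 hs.2.2.2]; norm_num
  have hcard : (({0, 1, e, 1 + e} : Finset F).card : ℤ) ≤ 4 := by
    exact_mod_cast Finset.card_le_four
  have hlow2 : (3 : ℤ) ≤ ∑ s : F, quadraticChar F (s * (1 + e - s)) := by
    refine le_trans ?_ hlow
    rw [Finset.sum_sub_distrib, ← Finset.mul_sum, Finset.sum_boole]
    have : (11 : ℤ) ≤ Fintype.card F := by exact_mod_cast hc
    simp only [Finset.sum_const, Finset.card_univ, nsmul_eq_mul, mul_one,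
      Finset.filter_univ_mem]
    linarith
  have hneg : ∀ s : F, quadraticChar F (s * (1 + e - s))
      = quadraticChar F (-1) * quadraticChar F ((s - 0) * (s - (1 + e))) := by
    intro s; rw [← map_mul]; congr 1; ring
  by_cases hce : 1 + e = 0
  · have : e = -1 := by linear_combination hce
    rw [this] at hens
    have hm := quadraticChar_neg_one_iff_not_isSquare.mpr hens
    have : ∑ s : F, quadraticChar F (s * (1 + e - s)) ≤ 0 := by
      apply Finset.sum_nonpos
      intro s _
      rw [hneg, hce, hm, sub_zero]
      by_cases hs : s = 0
      · simp [hs]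
      · rw [← sq, quadraticChar_sq_one' hs]; norm_num
    linarith
  · simp only [hneg] at hlow2
    rw [← Finset.mul_sum, aux_sum hF (Ne.symm hce)] at hlow2
    linarith [aux_ge (-1 : F)]

end aux


/-- Hasse–Weil step in Proposition 5.1. For a prime `p ≥ 11` dividing
neither `k − 468·4330²` nor `k − (468·4330² − 36³)`, the affine curve
`−36(x²−36)(y²−36) = k − 468·4330²` over `𝔽_p` has a smooth `𝔽_p`-point. -/
theorem stmt4 (p : ℕ) (hp : p.Prime) (hp11 : 11 ≤ p) (k : ℤ)
    (h1 : ¬ (p : ℤ) ∣ (k - 8774485200)) (h2 : ¬ (p : ℤ) ∣ (k - 8774438544)) :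
    ∃ x y : ZMod p,
      -36 * (x ^ 2 - 36) * (y ^ 2 - 36) = (k : ZMod p) - 8774485200 ∧
      (x * (y ^ 2 - 36) ≠ 0 ∨ y * (x ^ 2 - 36) ≠ 0) := by
  haveI : Fact p.Prime := ⟨hp⟩
  have hchar : ringChar (ZMod p) ≠ 2 := by rw [ZMod.ringChar_zmod_n]; omega
  have h6 : (6 : ZMod p) ≠ 0 := by
    intro h
    have h' : ((6 : ℕ) : ZMod p) = 0 := by exact_mod_cast h
    rw [ZMod.natCast_eq_zero_iff] at h'
    have := Nat.le_of_dvd (by norm_num) h'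
    omega
  have hK : (k : ZMod p) - 8774485200 ≠ 0 := by
    intro h; apply h1
    rw [← ZMod.intCast_zmod_eq_zero_iff_dvd]; push_cast; exact h
  have hK2 : (k : ZMod p) - 8774438544 ≠ 0 := by
    intro h; apply h2
    rw [← ZMod.intCast_zmod_eq_zero_iff_dvd]; push_cast; exact h
  set K : ZMod p := (k : ZMod p) - 8774485200 with hKdef
  have hK3 : K + 6 ^ 6 ≠ 0 := by
    intro h; apply hK2; rw [← h, hKdef]; ring
  have h66 : (6 : ZMod p) ^ 6 ≠ 0 := pow_ne_zero _ h6
  obtain ⟨s, ⟨u, hu⟩, hs1, ⟨w, hw⟩⟩ := aux_main hchar (by rw [ZMod.card]; exact hp11)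
    (e := (K + 6 ^ 6) / 6 ^ 6) (div_ne_zero hK3 h66)
    (by rw [Ne, div_eq_one_iff_eq h66]; intro h; apply hK; linear_combination h)
  have hs : s - 1 ≠ 0 := sub_ne_zero.mpr hs1
  have hw' : (s - 1) * (6 ^ 6 * s - (K + 6 ^ 6)) = 6 ^ 6 * (w * w) := by
    rw [← hw]; field_simp
  have heq : -36 * ((6 * u) ^ 2 - 36) * ((6 * (w / (s - 1))) ^ 2 - 36) = K := by
    have a1 : (6 * u) ^ 2 - 36 = 36 * (s - 1) := by rw [hu]; ring
    have a2 : (6 * (w / (s - 1))) ^ 2 - 36 = 36 * (w * w - (s - 1) ^ 2) / (s - 1) ^ 2 := by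
      field_simp; ring
    rw [a1, a2, ← mul_div_assoc, div_eq_iff (pow_ne_zero 2 hs)]
    linear_combination (s - 1) * hw'
  refine ⟨6 * u, 6 * (w / (s - 1)), heq, ?_⟩
  generalize 6 * u = x at heq
  generalize 6 * (w / (s - 1)) = y at heq
  by_contra hn
  push Not at hn
  obtain ⟨n1, n2⟩ := hn
  have hy : y ^ 2 - 36 ≠ 0 := by
    intro h; apply hK; rw [← heq, h, mul_zero]
  have hx : x ^ 2 - 36 ≠ 0 := by
    intro h; apply hK; rw [← heq, h]; ring
  have x0 : x = 0 := (mul_eq_zero.mp n1).resolve_right hy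
  have y0 : y = 0 := (mul_eq_zero.mp n2).resolve_right hx
  apply hK3
  rw [← heq, x0, y0]; ring
end

section
/- Let x, y, z be elements of ℤ/13ℤ satisfying (x²−36)·(y²−36)·(z²−36) = 1 in ℤ/13ℤ. Then at least one of the six elements x−6, x+6, y−6, y+6, z−6, z+6 of ℤ/13ℤ is not a square in ℤ/13ℤ. -/
theorem aux13 : ∀ a b : ZMod 13, a * a + 6 + 6 = b * b →
    (a * a + 6) ^ 2 - 36 = 0 ∨ (a * a + 6) ^ 2 - 36 = -1 := by
  decide

theorem aux13' (x : ZMod 13) (h1 : IsSquare (x - 6)) (h2 : IsSquare (x + 6)) :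
    x ^ 2 - 36 = 0 ∨ x ^ 2 - 36 = -1 := by
  obtain ⟨a, ha⟩ := h1
  obtain ⟨b, hb⟩ := h2
  obtain rfl : x = a * a + 6 := by rw [← ha]; ring
  exact aux13 a b hb

/-- residue computation at 13 in Theorem 5.2. If `x, y, z ∈ ℤ/13ℤ` satisfy
`(x²−36)(y²−36)(z²−36) = 1`, then one of `x ± 6`, `y ± 6`, `z ± 6` is a nonsquare in `ℤ/13ℤ`. -/
theorem stmt5 (x y z : ZMod 13)
    (h : (x ^ 2 - 36) * (y ^ 2 - 36) * (z ^ 2 - 36) = 1) :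
    ¬ IsSquare (x - 6) ∨ ¬ IsSquare (x + 6) ∨
    ¬ IsSquare (y - 6) ∨ ¬ IsSquare (y + 6) ∨
    ¬ IsSquare (z - 6) ∨ ¬ IsSquare (z + 6) := by
  by_contra hc
  simp only [not_or, not_not] at hc
  obtain ⟨h1, h2, h3, h4, h5, h6⟩ := hc
  rcases aux13' x h1 h2 with hx | hx <;> rcases aux13' y h3 h4 with hy | hy <;>
    rcases aux13' z h5 h6 with hz | hz <;> rw [hx, hy, hz] at h <;> revert h <;> decide
end

section
/- Let P = 2³·3·5·7·11·13·31·433·2017·3253·8501·32687·46649·4057231. Let ℓ be a positive integer with ℓ ≡ 1 (mod P) such that for every prime number p dividing ℓ, 13 is a square in ℤ/pℤ. Then there are no integers x, y, z satisfying (x²−36)·(y²−36)·(z²−36) + 468·(xyz−4330)² = ℓ². -/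
lemma sq13_of_prime (p : ℕ) (hp : p.Prime) (h2 : p ≠ 2) (h : IsSquare (13 : ZMod p)) :
    IsSquare (p : ZMod 13) := by
  haveI := Fact.mk hp
  haveI : Fact (Nat.Prime 13) := ⟨by norm_num⟩
  have := (ZMod.exists_sq_eq_prime_iff_of_mod_four_eq_one (p := 13) (q := p) (by norm_num) h2)
  exact this.2 (by simpa using h)

lemma sq13_nat (n : ℕ) : n ≠ 0 → (∀ p : ℕ, p.Prime → p ∣ n → IsSquare (p : ZMod 13)) →
    IsSquare (n : ZMod 13) := by
  induction n using induction_on_primes with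
  | zero => intro h; exact absurd rfl h
  | one => intro _ _; simp
  | prime_mul p a hp ih =>
    intro h0 h
    rw [Nat.cast_mul]
    refine (h p hp (dvd_mul_right _ _)).mul (ih (right_ne_zero_of_mul h0) ?_)
    intro q hq hqa
    exact h q hq (hqa.mul_left _)

lemma sq13_int (n : ℤ) (h0 : n ≠ 0)
    (h : ∀ p : ℕ, p.Prime → (p : ℤ) ∣ n → IsSquare (p : ZMod 13)) :
    IsSquare (n : ZMod 13) := by
  have key := sq13_nat n.natAbs (by simpa using h0)
    (fun p hp hd => h p hp (Int.natCast_dvd.2 hd))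
  rcases Int.natAbs_eq n with e | e
  · rw [e]; simpa using key
  · rw [e]
    have m1 : IsSquare (-1 : ZMod 13) := ⟨5, by decide⟩
    have := m1.mul key
    rw [neg_one_mul] at this
    simpa using this

lemma sq13_dec : ∀ x : ZMod 13, IsSquare (x - 6) → IsSquare (x + 6) →
    x ^ 2 - 36 = 0 ∨ x ^ 2 - 36 = -1 := by decide

/-- Theorem 5.2. Let `ℓ` be a positive integer, `ℓ ≡ 1 (mod P)`, such that
`13` is a quadratic residue modulo every prime divisor of `ℓ`. Then the Markoff-type K3 surface
`(x²−36)(y²−36)(z²−36) + 468(xyz−4330)² = ℓ²` has no integral points. -/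
theorem stmt7 (ℓ : ℤ) (hℓ : 0 < ℓ)
    (hmod : ℓ ≡ 1 [ZMOD (2 ^ 3 * 3 * 5 * 7 * 11 * 13 * 31 * 433 * 2017 * 3253 * 8501 *
      32687 * 46649 * 4057231)])
    (hqr : ∀ p : ℕ, p.Prime → (p : ℤ) ∣ ℓ → IsSquare (13 : ZMod p)) :
    ¬ ∃ x y z : ℤ,
      (x ^ 2 - 36) * (y ^ 2 - 36) * (z ^ 2 - 36) + 468 * (x * y * z - 4330) ^ 2 = ℓ ^ 2 := by
  rintro ⟨x, y, z, h⟩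
  have hodd : ¬ (2 : ℤ) ∣ ℓ := by
    have h2 : (2 : ℤ) ∣ 1 - ℓ := dvd_trans (by norm_num) hmod.dvd
    omega
  have h13 : (ℓ : ZMod 13) = 1 := by
    have h2 : (13 : ℤ) ∣ 1 - ℓ := dvd_trans (by norm_num) hmod.dvd
    have := (ZMod.intCast_zmod_eq_zero_iff_dvd (1 - ℓ) 13).2 (by exact_mod_cast h2)
    push_cast at this
    exact (sub_eq_zero.1 this).symm
  set N : ℤ := (x ^ 2 - 36) * (y ^ 2 - 36) * (z ^ 2 - 36) with hN
  have hsq : ∀ p : ℕ, p.Prime → (p : ℤ) ∣ N → IsSquare (p : ZMod 13) := by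
    intro p hp hd
    have h2 : p ≠ 2 := by
      rintro rfl
      apply hodd
      refine Int.prime_two.dvd_of_dvd_pow (n := 2) ?_
      rw [← h]
      exact dvd_add hd (Dvd.dvd.mul_right (by norm_num) _)
    apply sq13_of_prime p hp h2
    by_cases hl : (p : ℤ) ∣ ℓ
    · exact hqr p hp hl
    · haveI := Fact.mk hp
      have hl' : (ℓ : ZMod p) ≠ 0 := by
        rwa [Ne, ZMod.intCast_zmod_eq_zero_iff_dvd]
      have hN0 := (ZMod.intCast_zmod_eq_zero_iff_dvd N p).2 hd
      have h' := congrArg (Int.cast : ℤ → ZMod p) h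
      rw [Int.cast_add, hN0] at h'
      obtain ⟨w, hw⟩ : ∃ w : ZMod p, w = 6 * (x * y * z - 4330) := ⟨_, rfl⟩
      have e : 13 * w ^ 2 = (ℓ : ZMod p) ^ 2 := by
        push_cast at h'
        rw [← h', hw]; ring
      have w0 : w ≠ 0 := by
        intro w0
        rw [w0] at e
        apply hl'
        have : (ℓ : ZMod p) ^ 2 = 0 := by rw [← e]; ring
        exact pow_eq_zero_iff (two_ne_zero) |>.1 this
      refine ⟨ℓ / w, ?_⟩
      field_simp
      exact e
  have hN1 : (N : ZMod 13) = 1 := by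
    have h' := congrArg (Int.cast : ℤ → ZMod 13) h
    rw [Int.cast_add] at h'
    push_cast [h13] at h'
    have e : (468 : ZMod 13) = 0 := by decide
    rw [e, zero_mul, add_zero, one_pow] at h'
    rw [← h', hN]
  have hN0 : N ≠ 0 := by
    intro e
    rw [e] at hN1
    revert hN1; decide
  have fac : ∀ t : ℤ, (t ^ 2 - 36) ∣ N →
      (t : ZMod 13) ^ 2 - 36 = 0 ∨ (t : ZMod 13) ^ 2 - 36 = -1 := by
    intro t ht
    have aux : ∀ d : ℤ, d ∣ t ^ 2 - 36 → IsSquare (d : ZMod 13) := by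
      intro d hd
      have hdN := hd.trans ht
      refine sq13_int d (fun e => hN0 ?_) (fun p hp hpd => hsq p hp (hpd.trans hdN))
      rw [e] at hdN
      exact zero_dvd_iff.1 hdN
    have a1 := aux (t - 6) ⟨t + 6, by ring⟩
    have a2 := aux (t + 6) ⟨t - 6, by ring⟩
    push_cast at a1 a2
    exact sq13_dec _ a1 a2
  have fx := fac x ⟨(y ^ 2 - 36) * (z ^ 2 - 36), by rw [hN]; ring⟩
  have fy := fac y ⟨(x ^ 2 - 36) * (z ^ 2 - 36), by rw [hN]; ring⟩
  have fz := fac z ⟨(x ^ 2 - 36) * (y ^ 2 - 36), by rw [hN]; ring⟩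
  rw [hN] at hN1
  push_cast at hN1
  clear_value N
  rcases fx with e1 | e1 <;> rcases fy with e2 | e2 <;> rcases fz with e3 | e3 <;>
    rw [e1, e2, e3] at hN1 <;> revert hN1 <;> decide
end

section
/- There are no integers x, y, z satisfying (x²−36)·(y²−36)·(z²−36) + 468·(xyz−4330)² = 1. -/
lemma aux_res (n u : ℤ) (ho : n % 2 = 1) (h : n ∣ 13 * u ^ 2 - 1) :
    n % 13 = 1 ∨ n % 13 = 3 ∨ n % 13 = 4 ∨ n % 13 = 9 ∨ n % 13 = 10 ∨ n % 13 = 12 := by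
  obtain ⟨m, hm⟩ : ∃ m : ℕ, m = n.natAbs := ⟨_, rfl⟩
  have hmo : Odd m := by rw [Nat.odd_iff]; omega
  have hd : (m : ℤ) ∣ 13 * u ^ 2 - 1 := by rw [hm]; exact Int.natAbs_dvd.mpr h
  have h1 : jacobiSym (13 * u ^ 2) m = 1 := by
    rw [jacobiSym.mod_left, Int.emod_eq_emod_iff_emod_sub_eq_zero.mpr (Int.emod_eq_zero_of_dvd hd),
      ← jacobiSym.mod_left]
    simp
  have h2 : jacobiSym 13 m = 1 := by
    rw [jacobiSym.mul_left, jacobiSym.pow_left] at h1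
    rcases jacobiSym.trichotomy u m with h0 | h0 | h0 <;> rw [h0] at h1 <;> simpa using h1
  have h3 : jacobiSym (m : ℤ) 13 = 1 := by
    rw [← h2]
    exact (jacobiSym.quadratic_reciprocity_one_mod_four (a := 13) (by norm_num) hmo).symm
  rw [jacobiSym.mod_left] at h3
  have key : ∀ r : ℤ, 0 ≤ r → r < 13 → jacobiSym r 13 = 1 →
      r = 1 ∨ r = 3 ∨ r = 4 ∨ r = 9 ∨ r = 10 ∨ r = 12 := by
    intro r h0 h13 hr
    interval_cases r <;> first | omega | (exfalso; revert hr; norm_num)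
  have := key _ (Int.emod_nonneg _ (by norm_num)) (Int.emod_lt_of_pos _ (by norm_num)) h3
  omega

lemma aux_x (x u : ℤ) (ho : x % 2 = 1) (h : x ^ 2 - 36 ∣ 13 * u ^ 2 - 1) :
    (x ^ 2 - 36) ≡ -1 [ZMOD 13] := by
  have e : x ^ 2 - 36 = (x - 6) * (x + 6) := by ring
  have h1 := aux_res (x - 6) u (by omega) ((Dvd.intro _ e.symm).trans h)
  have h2 := aux_res (x + 6) u (by omega) ((Dvd.intro_left _ e.symm).trans h)
  have h3 : x % 13 = 3 ∨ x % 13 = 10 := by omega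
  rcases h3 with h3 | h3
  · have : x ≡ 3 [ZMOD 13] := h3
    exact ((this.pow 2).sub_right 36).trans (by decide)
  · have : x ≡ 10 [ZMOD 13] := h3
    exact ((this.pow 2).sub_right 36).trans (by decide)

/-- Example 5.3. There are no integers `x, y, z` with
`(x²−36)(y²−36)(z²−36) + 468(xyz−4330)² = 1`. -/
theorem stmt8 :
    ¬ ∃ x y z : ℤ,
      (x ^ 2 - 36) * (y ^ 2 - 36) * (z ^ 2 - 36) + 468 * (x * y * z - 4330) ^ 2 = 1 := by
  rintro ⟨x, y, z, h⟩
  obtain ⟨w, hw⟩ : ∃ w, w = x * y * z - 4330 := ⟨_, rfl⟩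
  rw [← hw] at h
  have hodd : Odd ((x ^ 2 - 36) * (y ^ 2 - 36) * (z ^ 2 - 36)) :=
    ⟨-234 * w ^ 2, by linarith⟩
  rw [Int.odd_mul, Int.odd_mul] at hodd
  have ho : ∀ t : ℤ, Odd (t ^ 2 - 36) → t % 2 = 1 := by
    intro t ht
    rw [← Int.odd_iff]
    have : Odd (t ^ 2) := by
      obtain ⟨k, hk⟩ := ht
      exact ⟨k + 18, by linarith⟩
    exact (Int.odd_pow' (by norm_num)).mp this
  have hx := aux_x x (6 * w) (ho x hodd.1.1)
    ⟨-((y ^ 2 - 36) * (z ^ 2 - 36)), by linarith⟩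
  have hy := aux_x y (6 * w) (ho y hodd.1.2)
    ⟨-((x ^ 2 - 36) * (z ^ 2 - 36)), by linarith⟩
  have hz := aux_x z (6 * w) (ho z hodd.2)
    ⟨-((x ^ 2 - 36) * (y ^ 2 - 36)), by linarith⟩
  have hp := (hx.mul hy).mul hz
  have : (x ^ 2 - 36) * (y ^ 2 - 36) * (z ^ 2 - 36) = 1 - 468 * w ^ 2 := by linarith
  rw [this] at hp
  unfold Int.ModEq at hp
  omega
end

section
/- For a real number M ≥ 0 let S(M) be the set of integers k with |k| ≤ M such that the equation (x²−36)(y²−36)(z²−36) + 468·(xyz−4330)² = k has a solution in real numbers x, y, z and, for every prime p, a solution in p-adic integers x, y, z ∈ ℤ_p. Then there exist constants c₁ > 0, c₂ > 0 and M₀ such that for all M ≥ M₀ one has c₁·M ≤ #S(M) ≤ c₂·M. -/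
/-- The integral model `𝒰_k` of the Markoff-type K3 surface
`(x²−36)(y²−36)(z²−36) + 468(xyz−4330)² = k` is everywhere locally solvable:
it has a real point and a `ℤ_p`-point for every prime `p`. -/
def MK3LocallySolvable (k : ℤ) : Prop :=
  (∃ x y z : ℝ,
    (x ^ 2 - 36) * (y ^ 2 - 36) * (z ^ 2 - 36) + 468 * (x * y * z - 4330) ^ 2 = (k : ℝ)) ∧
  (∀ (p : ℕ) [Fact p.Prime], ∃ x y z : ℤ_[p],
    (x ^ 2 - 36) * (y ^ 2 - 36) * (z ^ 2 - 36) + 468 * (x * y * z - 4330) ^ 2 = (k : ℤ_[p]))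

lemma sq_hensel (p : ℕ) [Fact p.Prime] (w : ℤ_[p]) (hw : ‖w‖ < 1) :
    ∃ x : ℤ_[p], x ^ 2 = 1 + 4 * w := by
  have h2 : (2 : ℤ_[p]) ≠ 0 := two_ne_zero
  have h2' : 0 < ‖(2 : ℤ_[p])‖ := norm_pos_iff.mpr h2
  have key := hensels_lemma (p := p) (R := ℤ_[p])
    (F := (Polynomial.X ^ 2 - Polynomial.C (1 + 4 * w) : Polynomial ℤ_[p])) (a := 1) (by
      have e1 : Polynomial.aeval (1 : ℤ_[p])
          (Polynomial.X ^ 2 - Polynomial.C (1 + 4 * w) : Polynomial ℤ_[p]) = 2 * 2 * (-w) := by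
        rw [map_sub, map_pow, Polynomial.aeval_X, Polynomial.aeval_C, Algebra.algebraMap_self,
          RingHom.id_apply]
        ring
      have e2 : Polynomial.aeval (1 : ℤ_[p]) (Polynomial.derivative
          (Polynomial.X ^ 2 - Polynomial.C (1 + 4 * w) : Polynomial ℤ_[p])) = 2 := by
        simp [one_add_one_eq_two]
      rw [e1, e2, norm_mul, norm_mul, norm_neg]
      nlinarith [mul_pos h2' h2'])
  obtain ⟨z, hz, -⟩ := key
  refine ⟨z, ?_⟩
  simp at hz
  linear_combination hz

lemma good_case (p : ℕ) [Fact p.Prime] (hp : ¬ p ∣ 168870) (k : ℤ_[p]) : ∃ x y z : ℤ_[p],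
    (x ^ 2 - 36) * (y ^ 2 - 36) * (z ^ 2 - 36) + 468 * (x * y * z - 4330) ^ 2 = k := by
  have hpp : p.Prime := Fact.out
  have unit : ∀ q : ℕ, q ∣ 168870 ^ 10 → ∃ b : ℤ_[p], (q : ℤ_[p]) * b = 1 := by
    intro q hq
    have hnd : ¬ p ∣ q := fun h => hp (hpp.dvd_of_dvd_pow (h.trans hq))
    have : IsUnit (q : ℤ_[p]) := by
      rw [PadicInt.isUnit_iff]
      have hle := PadicInt.norm_le_one (q : ℤ_[p])
      by_contra hne
      have hlt := lt_of_le_of_ne hle hne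
      have h3 := (PadicInt.norm_int_lt_one_iff_dvd (p := p) (q : ℤ)).mp (by simpa using hlt)
      exact hnd (by exact_mod_cast h3)
    exact this.exists_right_inv
  obtain ⟨b, hb⟩ := unit 25 (by norm_num)
  obtain ⟨c, hc⟩ := unit (2 * 468 * 4330 * 72) (by norm_num)
  push_cast at hb hc
  refine ⟨25 * (468 * 4330 ^ 2 + 36 * 2426112 * b ^ 2 - k) * c, 6 * b, 12, ?_⟩
  set d : ℤ_[p] := 468 * 4330 ^ 2 + 36 * 2426112 * b ^ 2 - k with hd
  have hA : ((6 * b) ^ 2 - 36) * ((12 : ℤ_[p]) ^ 2 - 36) = - 2426112 * b ^ 2 := by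
    linear_combination (108 * 36 * (25 * b + 1)) * hb
  have hl : 2 * 468 * 4330 * (25 * d * c * (6 * b) * 12) = d := by
    linear_combination d * 25 * b * hc + d * hb
  linear_combination ((25 * d * c) ^ 2 - 36) * hA - hl - hd

lemma solvable (t : ℕ) :
    MK3LocallySolvable (1296 * (1 - 36) + 468 * 4330 ^ 2 + 10368 * 168870 * (t : ℤ)) := by
  constructor
  · refine ⟨√(1 + 8 * 168870 * t), 0, 0, ?_⟩
    rw [Real.sq_sqrt (by positivity)]
    push_cast; ring
  · intro p _
    by_cases hp : p ∣ 168870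
    · obtain ⟨x, hx⟩ := sq_hensel p (((2 * 168870 * t : ℤ)) : ℤ_[p]) (by
        rw [PadicInt.norm_int_lt_one_iff_dvd]
        have : (p : ℤ) ∣ 168870 := by exact_mod_cast hp
        exact (this.mul_left 2).mul_right _)
      refine ⟨x, 0, 0, ?_⟩
      rw [hx]
      push_cast; ring
    · exact good_case p hp _

/-- first counting assertion of Theorem 5.4. The number of `k ∈ ℤ` with
`|k| ≤ M` for which `𝒰_k` is everywhere locally solvable is `≍ M` as `M → ∞`. -/
theorem stmt9 :
    ∃ c₁ c₂ M₀ : ℝ, 0 < c₁ ∧ 0 < c₂ ∧ ∀ M : ℝ, M₀ ≤ M →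
      c₁ * M ≤ ({k : ℤ | |(k : ℝ)| ≤ M ∧ MK3LocallySolvable k}.ncard : ℝ) ∧
      ({k : ℤ | |(k : ℝ)| ≤ M ∧ MK3LocallySolvable k}.ncard : ℝ) ≤ c₂ * M := by
  refine ⟨1 / (2 * (10368 * 168870)), 3, 10 ^ 11, by norm_num, by norm_num, ?_⟩
  intro M hM
  set S : Set ℤ := {k : ℤ | |(k : ℝ)| ≤ M ∧ MK3LocallySolvable k} with hS
  have hM0 : 0 ≤ M := le_trans (by norm_num) hM
  have hsub : S ⊆ ((Finset.Icc (-⌊M⌋) ⌊M⌋ : Finset ℤ) : Set ℤ) := by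
    rintro k ⟨hk, -⟩
    rw [abs_le] at hk
    rw [Finset.coe_Icc, Set.mem_Icc]
    constructor
    · have : -k ≤ ⌊M⌋ := Int.le_floor.mpr (by push_cast; linarith)
      linarith
    · exact Int.le_floor.mpr hk.2
  have hfin : S.Finite := (Finset.finite_toSet _).subset hsub
  constructor
  · set n := ⌊M / (2 * (10368 * 168870))⌋₊ + 1 with hn
    let g : ℕ → ℤ := fun t => 1296 * (1 - 36) + 468 * 4330 ^ 2 + 10368 * 168870 * (t : ℤ)
    have hg : Function.Injective g := by
      intro a b hab
      simp only [g] at hab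
      omega
    have hsub2 : (((Finset.range n).image g : Finset ℤ) : Set ℤ) ⊆ S := by
      intro k hk
      simp only [Finset.coe_image, Set.mem_image, Finset.coe_range, Set.mem_Iio] at hk
      obtain ⟨t, ht, rfl⟩ := hk
      refine ⟨?_, solvable t⟩
      have ht' : t ≤ ⌊M / (2 * (10368 * 168870))⌋₊ := by omega
      have h1 : (t : ℝ) ≤ M / (2 * (10368 * 168870)) :=
        (Nat.le_floor_iff (by positivity)).mp ht'
      rw [le_div_iff₀ (by norm_num)] at h1
      have h0 : (0 : ℝ) ≤ t := Nat.cast_nonneg t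
      simp only [g]
      push_cast
      rw [abs_le]
      constructor <;> linarith
    have hc := Set.ncard_le_ncard hsub2 hfin
    rw [Set.ncard_coe_finset, Finset.card_image_of_injective _ hg, Finset.card_range] at hc
    have h2 : M / (2 * (10368 * 168870)) < n := by
      rw [hn]; push_cast; exact Nat.lt_floor_add_one _
    have hc' : (n : ℝ) ≤ S.ncard := by exact_mod_cast hc
    calc 1 / (2 * (10368 * 168870)) * M = M / (2 * (10368 * 168870)) := by ring
      _ ≤ S.ncard := by linarith
  · have hc := Set.ncard_le_ncard hsub (Finset.finite_toSet _)
    rw [Set.ncard_coe_finset, Int.card_Icc] at hc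
    have hf : 0 ≤ ⌊M⌋ := Int.floor_nonneg.mpr hM0
    have hz : (S.ncard : ℤ) ≤ 2 * ⌊M⌋ + 1 := by omega
    have hr : (S.ncard : ℝ) ≤ 2 * (⌊M⌋ : ℝ) + 1 := by exact_mod_cast hz
    have := Int.floor_le M
    linarith
end

section
/- Let a, b, c, d, e be nonzero integers with a ≡ 0, b ≡ −1, c ≡ 1, d ≡ 1, e ≡ 4 (mod 7), and assume a·d ≠ b² and d² ≠ b·e. Then the set of triples of integers (x, y, z) satisfying a·x²y²z² + b·(x²y² + x²z² + y²z²) + c·xyz + d·(x² + y² + z²) + e = 0 is finite. -/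
theorem aux_dom (T A S B M : ℤ) (hA : A ≠ 0) (hM : 0 < M) (hS : |S| * T ≤ B * M) (hT : B < T)
    (h : A * M + S = 0) (hT0 : 0 < T) : False := by
  have h1 : |S| = |A| * M := by
    have : S = -(A * M) := by linarith
    rw [this, abs_neg, abs_mul, abs_of_pos hM]
  have h2 : 1 ≤ |A| := Int.one_le_abs hA
  rw [h1] at hS
  have h3 : M * T ≤ |A| * M * T := by
    have : 0 < M * T := mul_pos hM hT0
    nlinarith
  nlinarith

theorem aux_term (T k u M : ℤ) (h : |u| * T ≤ M) : |k * u| * T ≤ |k| * M := by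
  rw [abs_mul, mul_assoc]
  exact mul_le_mul_of_nonneg_left h (abs_nonneg k)

theorem aux_sq (T x : ℤ) (hT : 0 < T) (h : T < |x|) : T ≤ x ^ 2 ∧ |x| * T ≤ x ^ 2 ∧ 1 ≤ x ^ 2 := by
  rw [← sq_abs x]
  refine ⟨by nlinarith, by nlinarith, by nlinarith⟩

theorem aux_two_s11 (A B C D : ℤ) (hA : A ≠ 0) : ∃ N : ℤ, ∀ y z : ℤ,
    A * (y ^ 2 * z ^ 2) + B * y ^ 2 + B * z ^ 2 + C * (y * z) + D = 0 → |y| ≤ N ∨ |z| ≤ N := by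
  set T := 2 * |B| + |C| + |D| + 1 with hT
  have := abs_nonneg B
  have := abs_nonneg C
  have := abs_nonneg D
  have hT0 : 0 < T := by omega
  refine ⟨T, fun y z h => ?_⟩
  by_contra! hc
  obtain ⟨y1, y2, y3⟩ := aux_sq T y hT0 hc.1
  obtain ⟨z1, z2, z3⟩ := aux_sq T z hT0 hc.2
  have t1 := aux_term T B (y ^ 2) (y ^ 2 * z ^ 2) (by rw [abs_of_pos (by omega)]; nlinarith)
  have t2 := aux_term T B (z ^ 2) (y ^ 2 * z ^ 2) (by rw [abs_of_pos (by omega)]; nlinarith)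
  have t3 := aux_term T C (y * z) (y ^ 2 * z ^ 2) (by
    rw [abs_mul]
    have : |z| ≤ z ^ 2 := by rw [← sq_abs z]; nlinarith
    calc |y| * |z| * T = (|y| * T) * |z| := by ring
      _ ≤ y ^ 2 * z ^ 2 := mul_le_mul y2 this (abs_nonneg _) (by positivity))
  have t4 := aux_term T D 1 (y ^ 2 * z ^ 2) (by simp; nlinarith)
  refine aux_dom T A (B * y ^ 2 + B * z ^ 2 + C * (y * z) + D * 1) (2 * |B| + |C| + |D|)
    (y ^ 2 * z ^ 2) hA (by positivity) ?_ (by omega) (by linarith) hT0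
  have a1 := abs_add_le (B * y ^ 2 + B * z ^ 2 + C * (y * z)) (D * 1)
  have a2 := abs_add_le (B * y ^ 2 + B * z ^ 2) (C * (y * z))
  have a3 := abs_add_le (B * y ^ 2) (B * z ^ 2)
  have := mul_le_mul_of_nonneg_right (a1.trans (add_le_add_left (a2.trans (add_le_add_left a3 _)) _)) hT0.le
  linarith

theorem aux_three (a b c d e : ℤ) (ha : a ≠ 0) : ∃ N : ℤ, ∀ x y z : ℤ,
    a * x ^ 2 * y ^ 2 * z ^ 2 + b * (x ^ 2 * y ^ 2 + x ^ 2 * z ^ 2 + y ^ 2 * z ^ 2) +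
        c * (x * y * z) + d * (x ^ 2 + y ^ 2 + z ^ 2) + e = 0 → |x| ≤ N ∨ |y| ≤ N ∨ |z| ≤ N := by
  set T := 3 * |b| + |c| + 3 * |d| + |e| + 1 with hT
  have := abs_nonneg b
  have := abs_nonneg c
  have := abs_nonneg d
  have := abs_nonneg e
  have hT0 : 0 < T := by omega
  refine ⟨T, fun x y z h => ?_⟩
  by_contra! hc
  obtain ⟨x1, x2, x3⟩ := aux_sq T x hT0 hc.1
  obtain ⟨y1, y2, y3⟩ := aux_sq T y hT0 hc.2.1
  obtain ⟨z1, z2, z3⟩ := aux_sq T z hT0 hc.2.2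
  have hy : |y| ≤ y ^ 2 := by rw [← sq_abs y]; nlinarith
  have hz : |z| ≤ z ^ 2 := by rw [← sq_abs z]; nlinarith
  have hx : T * 1 * 1 ≤ x ^ 2 * y ^ 2 * z ^ 2 := by gcongr
  have p1 : x ^ 2 * y ^ 2 * T ≤ x ^ 2 * y ^ 2 * z ^ 2 := by gcongr
  have p2 : x ^ 2 * T * z ^ 2 ≤ x ^ 2 * y ^ 2 * z ^ 2 := by gcongr
  have p3 : T * y ^ 2 * z ^ 2 ≤ x ^ 2 * y ^ 2 * z ^ 2 := by gcongr
  have q1 : x ^ 2 * T * 1 ≤ x ^ 2 * y ^ 2 * z ^ 2 := by gcongr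
  have q2 : T * y ^ 2 * 1 ≤ x ^ 2 * y ^ 2 * z ^ 2 := by gcongr
  have q3 : T * 1 * z ^ 2 ≤ x ^ 2 * y ^ 2 * z ^ 2 := by gcongr
  have t1 := aux_term T b (x ^ 2 * y ^ 2 + x ^ 2 * z ^ 2 + y ^ 2 * z ^ 2)
    (3 * (x ^ 2 * y ^ 2 * z ^ 2)) (by rw [abs_of_nonneg (by positivity)]; linarith)
  have t2 := aux_term T d (x ^ 2 + y ^ 2 + z ^ 2)
    (3 * (x ^ 2 * y ^ 2 * z ^ 2)) (by rw [abs_of_nonneg (by positivity)]; linarith)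
  have t3 := aux_term T c (x * y * z) (x ^ 2 * y ^ 2 * z ^ 2) (by
    rw [abs_mul, abs_mul]
    calc |x| * |y| * |z| * T = (|x| * T) * |y| * |z| := by ring
      _ ≤ x ^ 2 * y ^ 2 * z ^ 2 := by gcongr)
  have t4 := aux_term T e 1 (x ^ 2 * y ^ 2 * z ^ 2) (by simp; linarith)
  refine aux_dom T a (b * (x ^ 2 * y ^ 2 + x ^ 2 * z ^ 2 + y ^ 2 * z ^ 2) + c * (x * y * z)
    + d * (x ^ 2 + y ^ 2 + z ^ 2) + e * 1) (3 * |b| + |c| + 3 * |d| + |e|)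
    (x ^ 2 * y ^ 2 * z ^ 2) ha (by positivity) ?_ (by omega) (by linarith) hT0
  have a1 := abs_add_le (b * (x ^ 2 * y ^ 2 + x ^ 2 * z ^ 2 + y ^ 2 * z ^ 2) + c * (x * y * z)
    + d * (x ^ 2 + y ^ 2 + z ^ 2)) (e * 1)
  have a2 := abs_add_le (b * (x ^ 2 * y ^ 2 + x ^ 2 * z ^ 2 + y ^ 2 * z ^ 2) + c * (x * y * z))
    (d * (x ^ 2 + y ^ 2 + z ^ 2))
  have a3 := abs_add_le (b * (x ^ 2 * y ^ 2 + x ^ 2 * z ^ 2 + y ^ 2 * z ^ 2)) (c * (x * y * z))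
  have := mul_le_mul_of_nonneg_right (a1.trans (add_le_add_left (a2.trans (add_le_add_left a3 _)) _)) hT0.le
  linarith

theorem aux_one (A B C : ℤ) (h : ¬ (A = 0 ∧ B = 0 ∧ C = 0)) :
    {z : ℤ | A * z ^ 2 + B * z + C = 0}.Finite := by
  let p : Polynomial ℤ := Polynomial.C A * Polynomial.X ^ 2 + Polynomial.C B * Polynomial.X +
    Polynomial.C C
  have hp : p ≠ 0 := by
    intro hp
    apply h
    have h0 : ∀ t : ℤ, A * t ^ 2 + B * t + C = 0 := fun t => by
      have := congrArg (Polynomial.eval t) hp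
      simpa only [p, Polynomial.eval_add, Polynomial.eval_mul, Polynomial.eval_C,
        Polynomial.eval_pow, Polynomial.eval_X, Polynomial.eval_zero] using this
    have e0 := h0 0
    have e1 := h0 1
    have e2 := h0 (-1)
    norm_num at e0 e1 e2
    refine ⟨?_, ?_, ?_⟩ <;> omega
  refine (Polynomial.finite_setOf_isRoot hp).subset ?_
  intro z hz
  simpa [p, Polynomial.IsRoot] using hz

/-- Proposition 6.1. For nonzero integers `a, b, c, d, e` with
`a ≡ 0, b ≡ −1, c ≡ 1, d ≡ 1, e ≡ 4 (mod 7)`, `ad ≠ b²` and `d² ≠ be`, the set of integral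
points of the affine Markoff-type K3 surface
`a x²y²z² + b(x²y²+x²z²+y²z²) + c xyz + d(x²+y²+z²) + e = 0` is finite. -/
theorem stmt11 (a b c d e : ℤ) (ha0 : a ≠ 0) (hb0 : b ≠ 0) (hc0 : c ≠ 0) (hd0 : d ≠ 0)
    (he0 : e ≠ 0) (ha7 : a ≡ 0 [ZMOD 7]) (hb7 : b ≡ -1 [ZMOD 7]) (hc7 : c ≡ 1 [ZMOD 7])
    (hd7 : d ≡ 1 [ZMOD 7]) (he7 : e ≡ 4 [ZMOD 7]) (hnd1 : a * d ≠ b ^ 2)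
    (hnd2 : d ^ 2 ≠ b * e) :
    {P : ℤ × ℤ × ℤ |
      a * P.1 ^ 2 * P.2.1 ^ 2 * P.2.2 ^ 2 +
        b * (P.1 ^ 2 * P.2.1 ^ 2 + P.1 ^ 2 * P.2.2 ^ 2 + P.2.1 ^ 2 * P.2.2 ^ 2) +
        c * (P.1 * P.2.1 * P.2.2) + d * (P.1 ^ 2 + P.2.1 ^ 2 + P.2.2 ^ 2) + e = 0}.Finite := by
  set Q : ℤ → ℤ → ℤ → Prop := fun x y z =>
    a * x ^ 2 * y ^ 2 * z ^ 2 + b * (x ^ 2 * y ^ 2 + x ^ 2 * z ^ 2 + y ^ 2 * z ^ 2) +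
        c * (x * y * z) + d * (x ^ 2 + y ^ 2 + z ^ 2) + e = 0 with hQ
  have s1 : ∀ x y z, Q x y z → Q x z y := by
    intro x y z h
    simp only [hQ] at h ⊢
    linarith
  have s2 : ∀ x y z, Q x y z → Q y x z := by
    intro x y z h
    simp only [hQ] at h ⊢
    linarith
  have key : ∀ y : ℤ, b * y ^ 2 + d = 0 → d * y ^ 2 + e = 0 → False := by
    intro y h1 h2
    apply hnd2
    linear_combination d * h1 - b * h2
  have L1 : ∀ x y, {z | Q x y z}.Finite := by
    intro x y
    refine (aux_one (a * x ^ 2 * y ^ 2 + b * (x ^ 2 + y ^ 2) + d) (c * x * y)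
      (b * x ^ 2 * y ^ 2 + d * (x ^ 2 + y ^ 2) + e) ?_).subset ?_
    · rintro ⟨h1, h2, h3⟩
      rcases mul_eq_zero.1 h2 with h | h
      · have h : x = 0 := by simpa [hc0] using h
        subst h
        exact key y (by linarith) (by linarith)
      · subst h
        exact key x (by linarith) (by linarith)
    · intro z hz
      simp only [hQ, Set.mem_setOf_eq] at hz ⊢
      linarith
  have L2 : ∀ x, {p : ℤ × ℤ | Q x p.1 p.2}.Finite := by
    intro x
    have hA : a * x ^ 2 + b ≠ 0 := by
      intro h
      have h1 : a * x ^ 2 + b ≡ 0 * x ^ 2 + -1 [ZMOD 7] := (ha7.mul_right _).add hb7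
      rw [h, zero_mul] at h1
      exact absurd h1 (by decide)
    obtain ⟨N, hN⟩ := aux_two_s11 (a * x ^ 2 + b) (b * x ^ 2 + d) (c * x) (d * x ^ 2 + e) hA
    have F : (⋃ y ∈ Set.Icc (-N) N, (fun z => (y, z)) '' {z | Q x y z}).Finite :=
      (Set.finite_Icc _ _).biUnion fun y _ => (L1 x y).image _
    refine (F.union (F.image Prod.swap)).subset ?_
    rintro ⟨y, z⟩ h
    have h' : Q x y z := h
    rcases hN y z (by simp only [hQ] at h'; linarith) with h1 | h1
    · left
      simp only [Set.mem_iUnion]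
      exact ⟨y, abs_le.1 h1, z, h', rfl⟩
    · right
      refine ⟨(z, y), ?_, rfl⟩
      simp only [Set.mem_iUnion]
      exact ⟨z, abs_le.1 h1, y, s1 _ _ _ h', rfl⟩
  obtain ⟨N, hN⟩ := aux_three a b c d e ha0
  have F : (⋃ x ∈ Set.Icc (-N) N, (fun p => (x, p)) '' {p : ℤ × ℤ | Q x p.1 p.2}).Finite :=
    (Set.finite_Icc _ _).biUnion fun x _ => (L2 x).image _
  refine ((F.union (F.image fun p => (p.2.1, p.1, p.2.2))).union
    (F.image fun p => (p.2.1, p.2.2, p.1))).subset ?_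
  rintro ⟨x, y, z⟩ h
  have h' : Q x y z := h
  rcases hN x y z h' with h1 | h1 | h1
  · left; left
    simp only [Set.mem_iUnion]
    exact ⟨x, abs_le.1 h1, (y, z), h', rfl⟩
  · left; right
    refine ⟨(y, x, z), ?_, rfl⟩
    simp only [Set.mem_iUnion]
    exact ⟨y, abs_le.1 h1, (x, z), s2 _ _ _ h', rfl⟩
  · right
    refine ⟨(z, x, y), ?_, rfl⟩
    simp only [Set.mem_iUnion]
    exact ⟨z, abs_le.1 h1, (x, y), s2 _ _ _ (s1 _ _ _ h'), rfl⟩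
end

section
/- Let M = ℤ⁸ with standard basis e₁, …, e₈, and let σ : M → M be the ℤ-linear map determined by σ(e₁) = e₁, σ(e₂) = e₂, σ(e₃) = e₃, σ(e₄) = e₁ − e₄, σ(e₅) = e₁ − e₅, σ(e₆) = e₂ − e₆, σ(e₇) = e₂ − e₇, σ(e₈) = e₃ − e₈. Then σ ∘ σ = id, and the quotient abelian group ker(1 + σ) / im(1 − σ) is isomorphic to (ℤ/2ℤ)². -/
/-- Galois cohomology computation in Theorem 4.7. Let `σ` be the
`ℤ`-linear endomorphism of `M = ℤ⁸` fixing `e₁, e₂, e₃` and sending `e₄ ↦ e₁ − e₄`,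
`e₅ ↦ e₁ − e₅`, `e₆ ↦ e₂ − e₆`, `e₇ ↦ e₂ − e₇`, `e₈ ↦ e₃ − e₈`. Then `σ ∘ σ = id` and
`ker(1 + σ)/im(1 − σ) ≅ (ℤ/2ℤ)²`. -/
theorem stmt12 (σ : Module.End ℤ (Fin 8 → ℤ))
    (h1 : σ (Pi.single 0 1) = Pi.single 0 1)
    (h2 : σ (Pi.single 1 1) = Pi.single 1 1)
    (h3 : σ (Pi.single 2 1) = Pi.single 2 1)
    (h4 : σ (Pi.single 3 1) = Pi.single 0 1 - Pi.single 3 1)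
    (h5 : σ (Pi.single 4 1) = Pi.single 0 1 - Pi.single 4 1)
    (h6 : σ (Pi.single 5 1) = Pi.single 1 1 - Pi.single 5 1)
    (h7 : σ (Pi.single 6 1) = Pi.single 1 1 - Pi.single 6 1)
    (h8 : σ (Pi.single 7 1) = Pi.single 2 1 - Pi.single 7 1) :
    σ ∘ₗ σ = LinearMap.id ∧
    Nonempty
      ((LinearMap.ker (1 + σ) ⧸
          (LinearMap.range (1 - σ)).comap (LinearMap.ker (1 + σ)).subtype) ≃+
        (ZMod 2 × ZMod 2)) := by
  have key : ∀ x : Fin 8 → ℤ, σ x = ![x 0 + x 3 + x 4, x 1 + x 5 + x 6, x 2 + x 7,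
      -x 3, -x 4, -x 5, -x 6, -x 7] := by
    intro x
    have hx : x = x 0 • Pi.single 0 1 + x 1 • Pi.single 1 1 + x 2 • Pi.single 2 1
        + x 3 • Pi.single 3 1 + x 4 • Pi.single 4 1 + x 5 • Pi.single 5 1
        + x 6 • Pi.single 6 1 + x 7 • Pi.single 7 1 := by
      ext i
      fin_cases i <;> simp [Pi.single_apply]
    conv_lhs => rw [hx]
    simp only [map_add, map_smul, h1, h2, h3, h4, h5, h6, h7, h8]
    ext i
    fin_cases i <;> simp [Pi.single_apply]
  have hker : ∀ x : Fin 8 → ℤ, x ∈ LinearMap.ker (1 + σ) ↔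
      (2 * x 0 + x 3 + x 4 = 0 ∧ 2 * x 1 + x 5 + x 6 = 0 ∧ 2 * x 2 + x 7 = 0) := by
    intro x
    rw [LinearMap.mem_ker, LinearMap.add_apply, key, funext_iff]
    simp [Fin.forall_fin_succ]
    grind
  refine ⟨?_, ?_⟩
  · apply LinearMap.ext
    intro x
    rw [LinearMap.comp_apply, key (σ x), key x]
    ext i
    fin_cases i <;> simp <;> ring
  let g : (Fin 8 → ℤ) →+ ZMod 2 × ZMod 2 :=
    { toFun := fun x => ((x 3 : ZMod 2), (x 5 : ZMod 2))
      map_zero' := by simp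
      map_add' := by intro x y; simp }
  let f : LinearMap.ker (1 + σ) →ₗ[ℤ] ZMod 2 × ZMod 2 :=
    g.toIntLinearMap ∘ₗ (LinearMap.ker (1 + σ)).subtype
  have hf : ∀ x, f x = ((x.1 3 : ZMod 2), (x.1 5 : ZMod 2)) := fun x => rfl
  have hsurj : Function.Surjective f := by
    rintro ⟨a, b⟩
    obtain ⟨a, rfl⟩ := ZMod.intCast_surjective a
    obtain ⟨b, rfl⟩ := ZMod.intCast_surjective b
    refine ⟨⟨![0, 0, 0, a, -a, b, -b, 0], ?_⟩, ?_⟩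
    · rw [hker]; simp
    · rw [hf]; simp
  have heq : (LinearMap.range (1 - σ)).comap (LinearMap.ker (1 + σ)).subtype
      = LinearMap.ker f := by
    ext ⟨x, hx⟩
    rw [hker] at hx
    rw [Submodule.mem_comap, LinearMap.mem_ker, hf, Prod.mk_eq_zero,
      ZMod.intCast_zmod_eq_zero_iff_dvd, ZMod.intCast_zmod_eq_zero_iff_dvd, LinearMap.mem_range]
    simp only [Submodule.subtype_apply]
    constructor
    · rintro ⟨y, hy⟩
      rw [LinearMap.sub_apply, key, funext_iff] at hy
      have e3 := hy 3
      have e5 := hy 5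
      simp at e3 e5
      constructor <;> push_cast <;> omega
    · rintro ⟨⟨a, ha⟩, ⟨b, hb⟩⟩
      push_cast at ha hb
      refine ⟨![0, 0, 0, a, -x 0 - a, b, -x 1 - b, -x 2], ?_⟩
      rw [LinearMap.sub_apply, key]
      ext i
      fin_cases i <;> simp <;> omega
  exact ⟨((Submodule.quotEquivOfEq _ _ heq).trans
    (f.quotKerEquivOfSurjective hsurj)).toAddEquiv⟩
end

section
/- Over the field 𝔽₇ with 7 elements, the number of triples of points ([x:r], [y:s], [z:t]) ∈ ℙ¹(𝔽₇) × ℙ¹(𝔽₇) × ℙ¹(𝔽₇) at which the (2,2,2)-form (x²−r²)(y²−s²)(z²−t²) − (xyz + 3rst)² − (rst)² vanishes is exactly 43. -/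
/-- The `(2,2,2)`-form `(x²−r²)(y²−s²)(z²−t²) − (xyz + 3rst)² − (rst)²` evaluated at
representatives `a = (x,r)`, `b = (y,s)`, `c = (z,t)`. -/
def MK3Form {K : Type*} [Field K] (a b c : Fin 2 → K) : K :=
  (a 0 ^ 2 - a 1 ^ 2) * (b 0 ^ 2 - b 1 ^ 2) * (c 0 ^ 2 - c 1 ^ 2) -
    (a 0 * b 0 * c 0 + 3 * (a 1 * b 1 * c 1)) ^ 2 - (a 1 * b 1 * c 1) ^ 2

instance : Fact (Nat.Prime 7) := ⟨by norm_num⟩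

def mkV : Fin 8 → Fin 2 → ZMod 7 := fun i => if i = 7 then ![1, 0] else ![(i.val : ZMod 7), 1]

theorem mkV_ne (i : Fin 8) : mkV i ≠ 0 := by
  revert i; decide

noncomputable def mkP (i : Fin 8) : Projectivization (ZMod 7) (Fin 2 → ZMod 7) :=
  Projectivization.mk _ (mkV i) (mkV_ne i)

theorem mkP_inj : Function.Injective mkP := by
  intro i j h
  unfold mkP at h
  rw [Projectivization.mk_eq_mk_iff'] at h
  revert i j
  decide

theorem exists_mkV : ∀ a b : ZMod 7, ¬ (a = 0 ∧ b = 0) →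
    ∃ i, ∃ c : ZMod 7, c * a = mkV i 0 ∧ c * b = mkV i 1 := by decide

theorem mkP_surj : Function.Surjective mkP := by
  intro p
  induction p using Projectivization.ind with
  | h v hv =>
    obtain ⟨i, c, h0, h1⟩ := exists_mkV (v 0) (v 1) (by
      rintro ⟨h0, h1⟩
      apply hv
      ext k; fin_cases k <;> assumption)
    refine ⟨i, ?_⟩
    unfold mkP
    rw [Projectivization.mk_eq_mk_iff']
    refine ⟨c, ?_⟩
    ext k; fin_cases k <;> assumption

theorem mkP_rep (i : Fin 8) : ∃ u : ZMod 7, u ≠ 0 ∧ (mkP i).rep = u • mkV i := by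
  obtain ⟨u, hu⟩ := Projectivization.exists_smul_eq_mk_rep (ZMod 7) (mkV i) (mkV_ne i)
  exact ⟨u, u.ne_zero, hu.symm⟩

theorem form_iff (i j k : Fin 8) :
    MK3Form (mkP i).rep (mkP j).rep (mkP k).rep = 0 ↔ MK3Form (mkV i) (mkV j) (mkV k) = 0 := by
  obtain ⟨u, hu, h1⟩ := mkP_rep i
  obtain ⟨v, hv, h2⟩ := mkP_rep j
  obtain ⟨w, hw, h3⟩ := mkP_rep k
  have : MK3Form (mkP i).rep (mkP j).rep (mkP k).rep
      = (u * v * w) ^ 2 * MK3Form (mkV i) (mkV j) (mkV k) := by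
    rw [h1, h2, h3]
    simp only [MK3Form, Pi.smul_apply, smul_eq_mul]
    ring
  rw [this]
  simp [hu, hv, hw]

def natForm (x r y s z t : ℕ) : ℕ :=
  ((x ^ 2 + 6 * r ^ 2) * (y ^ 2 + 6 * s ^ 2) * (z ^ 2 + 6 * t ^ 2) +
    6 * (x * y * z + 3 * (r * s * t)) ^ 2 + 6 * (r * s * t) ^ 2) % 7

def nx (i : Fin 8) : ℕ := if i.val = 7 then 1 else i.val
def nr (i : Fin 8) : ℕ := if i.val = 7 then 0 else 1

theorem mkV_zero (i : Fin 8) : mkV i 0 = (nx i : ZMod 7) := by revert i; decide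
theorem mkV_one (i : Fin 8) : mkV i 1 = (nr i : ZMod 7) := by revert i; decide

theorem form_nat (i j k : Fin 8) : MK3Form (mkV i) (mkV j) (mkV k) = 0 ↔
    natForm (nx i) (nr i) (nx j) (nr j) (nx k) (nr k) = 0 := by
  unfold natForm
  rw [← Nat.dvd_iff_mod_eq_zero, ← ZMod.natCast_eq_zero_iff]
  simp only [MK3Form, mkV_zero, mkV_one]
  push_cast
  have h6 : (6 : ZMod 7) = -1 := by decide
  rw [h6]
  ring_nf

set_option maxRecDepth 100000 in
theorem count_nat : (Finset.univ.filter (fun q : Fin 8 × Fin 8 × Fin 8 =>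
    natForm (nx q.1) (nr q.1) (nx q.2.1) (nr q.2.1) (nx q.2.2) (nr q.2.2) = 0)).card = 43 := by
  decide +kernel

/-- point count in Proposition 4.3. The `(2,2,2)`-form
`(x²−r²)(y²−s²)(z²−t²) − (xyz + 3rst)² − (rst)²` vanishes at exactly `43` points of
`ℙ¹ × ℙ¹ × ℙ¹` over `𝔽₇`. Since the form is homogeneous of degree 2 in each pair of
coordinates, its vanishing is independent of the chosen representatives. -/
theorem stmt14 :
    Set.ncard {P : Projectivization (ZMod 7) (Fin 2 → ZMod 7) ×
        Projectivization (ZMod 7) (Fin 2 → ZMod 7) ×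
        Projectivization (ZMod 7) (Fin 2 → ZMod 7) |
      MK3Form P.1.rep P.2.1.rep P.2.2.rep = 0} = 43 := by
  let f : Fin 8 × Fin 8 × Fin 8 → _ := Prod.map mkP (Prod.map mkP mkP)
  have hi : Function.Injective f := mkP_inj.prodMap (mkP_inj.prodMap mkP_inj)
  have hs : Function.Surjective f := mkP_surj.prodMap (mkP_surj.prodMap mkP_surj)
  rw [← count_nat, ← Set.ncard_coe_finset, ← Set.ncard_image_of_injective _ hi]
  congr 1
  ext P
  obtain ⟨q, rfl⟩ := hs P
  rw [hi.mem_set_image]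
  simp only [Set.mem_setOf_eq, Finset.coe_filter, Finset.mem_univ, true_and]
  exact (form_iff _ _ _).trans (form_nat _ _ _)
end

section
/- Over the field 𝔽₄₉ with 49 elements, the number of triples of points ([x:r], [y:s], [z:t]) ∈ ℙ¹(𝔽₄₉) × ℙ¹(𝔽₄₉) × ℙ¹(𝔽₄₉) at which the (2,2,2)-form (x²−r²)(y²−s²)(z²−t²) − (xyz + 3rst)² − (rst)² vanishes is exactly 2843. -/
namespace MK3

abbrev K := GaloisField 7 2

noncomputable instance : Fintype K := Fintype.ofFinite K
noncomputable instance : DecidableEq K := Classical.decEq K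

theorem card_K : Fintype.card K = 49 := by
  rw [← Nat.card_eq_fintype_card, GaloisField.card 7 2 (by norm_num)]; norm_num

theorem seven : (7 : K) = 0 := by
  have := CharP.cast_eq_zero K 7
  exact_mod_cast this

theorem exists_i : ∃ i : K, i * i = -1 := by
  have : IsSquare (-1 : K) := by
    rw [FiniteField.isSquare_neg_one_iff, card_K]; norm_num
  obtain ⟨i, hi⟩ := this
  exact ⟨i, hi.symm⟩

noncomputable def I : K := exists_i.choose
theorem I_mul : I * I = -1 := exists_i.choose_spec

/-- pairs of naturals mapped to the field -/
noncomputable def phi (p : ℕ × ℕ) : K := (p.1 : K) + (p.2 : K) * I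

def mulN (p q : ℕ × ℕ) : ℕ × ℕ := (p.1 * q.1 + 6 * (p.2 * q.2), p.1 * q.2 + p.2 * q.1)
def addN (p q : ℕ × ℕ) : ℕ × ℕ := (p.1 + q.1, p.2 + q.2)
def smulN (n : ℕ) (p : ℕ × ℕ) : ℕ × ℕ := (n * p.1, n * p.2)
def zeroN (p : ℕ × ℕ) : Bool := (p.1 % 7 == 0) && (p.2 % 7 == 0)

theorem phi_mul (p q) : phi (mulN p q) = phi p * phi q := by
  simp only [phi, mulN]; push_cast
  linear_combination (-(p.2 : K) * q.2) * I_mul + (p.2 : K) * q.2 * seven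
theorem phi_add (p q) : phi (addN p q) = phi p + phi q := by
  simp only [phi, addN]; push_cast; ring
theorem phi_smul (n p) : phi (smulN n p) = n * phi p := by
  simp only [phi, smulN]; push_cast; ring

theorem cast_zero (n : ℕ) : (n : K) = 0 ↔ n % 7 = 0 := by
  rw [CharP.cast_eq_zero_iff K 7, Nat.dvd_iff_mod_eq_zero]

theorem norm_dec : ∀ a b : Fin 7, (a.1 * a.1 + b.1 * b.1) % 7 = 0 → a.1 = 0 ∧ b.1 = 0 := by decide

theorem phi_zero (p) : phi p = 0 ↔ zeroN p = true := by
  simp only [zeroN, Bool.and_eq_true, beq_iff_eq]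
  constructor
  · intro h
    have h2 : ((p.1 * p.1 + p.2 * p.2 : ℕ) : K) = 0 := by
      push_cast
      simp only [phi] at h
      linear_combination ((p.1 : K) - p.2 * I) * h + (p.2 : K) * p.2 * I_mul
    rw [cast_zero] at h2
    have := norm_dec ⟨p.1 % 7, Nat.mod_lt _ (by norm_num)⟩ ⟨p.2 % 7, Nat.mod_lt _ (by norm_num)⟩
    apply this
    simpa [Nat.add_mod, Nat.mul_mod] using h2
  · rintro ⟨h1, h2⟩
    rw [← cast_zero] at h1 h2
    simp [phi, h1, h2]

abbrev F := Fin 7 × Fin 7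
def toN (p : F) : ℕ × ℕ := (p.1.1, p.2.1)

theorem toN_inj_dec : ∀ p q : F, zeroN (addN (toN p) (smulN 6 (toN q))) = true → p = q := by
  decide +kernel

noncomputable def psi (p : F) : K := phi (toN p)

theorem psi_bij : Function.Bijective psi := by
  rw [Fintype.bijective_iff_injective_and_card]
  refine ⟨?_, by rw [card_K]; rfl⟩
  intro p q h
  apply toN_inj_dec
  rw [← phi_zero, phi_add, phi_smul]
  simp only [psi] at h
  rw [h]; push_cast; linear_combination phi (toN q) * seven

noncomputable def e : F ≃ K := Equiv.ofBijective psi psi_bij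

/-- number of square roots -/
def sN (p : ℕ × ℕ) : ℕ :=
  match (p.1 * p.1 + p.2 * p.2) % 7 with
  | 0 => 1
  | 1 => 2
  | 2 => 2
  | 4 => 2
  | _ => 0

theorem sN_dec : ∀ a b : Fin 7, (Finset.univ.filter (fun w : F =>
    zeroN (addN (mulN (toN w) (toN w)) (smulN 6 (toN (a, b)))) = true)).card = sN (a.1, b.1) := by
  decide +kernel

theorem phi_mod (p : ℕ × ℕ) : phi (p.1 % 7, p.2 % 7) = phi p := by
  have h (n : ℕ) : ((n % 7 : ℕ) : K) = n := by
    conv_rhs => rw [← Nat.mod_add_div n 7]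
    push_cast; rw [seven]; ring
  simp [phi, h]

theorem sN_mod (p : ℕ × ℕ) : sN (p.1 % 7, p.2 % 7) = sN p := by
  have : ((p.1 % 7) * (p.1 % 7) + (p.2 % 7) * (p.2 % 7)) % 7 = (p.1 * p.1 + p.2 * p.2) % 7 := by
    simp [Nat.add_mod, Nat.mul_mod]
  simp only [sN, this]

theorem card_sqrt (p : ℕ × ℕ) :
    (Finset.univ.filter (fun w : K => w * w = phi p)).card = sN p := by
  rw [← sN_mod, ← phi_mod]
  have := sN_dec ⟨p.1 % 7, Nat.mod_lt _ (by norm_num)⟩ ⟨p.2 % 7, Nat.mod_lt _ (by norm_num)⟩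
  rw [← this]
  symm
  apply Finset.card_equiv e
  intro w
  simp only [Finset.mem_filter, Finset.mem_univ, true_and]
  rw [← phi_zero, phi_add, phi_smul, phi_mul]
  change _ ↔ psi w * psi w = _
  simp only [psi, toN]
  constructor
  · intro h; push_cast at h; linear_combination h - phi (p.1 % 7, p.2 % 7) * seven
  · intro h; push_cast; linear_combination h + phi (p.1 % 7, p.2 % 7) * seven

theorem two_ne : (2 : K) ≠ 0 := by
  intro h
  have : ((2 : ℕ) : K) = 0 := by exact_mod_cast h
  rw [cast_zero] at this
  omega

def vec {R : Type*} [Zero R] [One R] : Option R → Fin 2 → R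
  | none => ![1, 0]
  | some x => ![x, 1]

theorem count_quad (a b c : K) :
    (Finset.univ.filter (fun o : Option K =>
      a * (vec o 0) ^ 2 + 2 * b * vec o 0 * vec o 1 + c * (vec o 1) ^ 2 = 0)).card =
    if a = 0 ∧ b = 0 ∧ c = 0 then 50 else
      (Finset.univ.filter (fun w : K => w * w = b ^ 2 - a * c)).card := by
  have h2 := two_ne
  split_ifs with h
  · obtain ⟨rfl, rfl, rfl⟩ := h
    simp [card_K]
  by_cases ha : a = 0
  · subst ha
    by_cases hb : b = 0
    · subst hb
      have hc : c ≠ 0 := by simpa using h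
      have h1 : (Finset.univ.filter (fun o : Option K =>
        0 * (vec o 0) ^ 2 + 2 * 0 * vec o 0 * vec o 1 + c * (vec o 1) ^ 2 = 0)) = {none} := by
        ext o; cases o <;> simp [vec, hc]
      have h3 : (Finset.univ.filter (fun w : K => w * w = 0 ^ 2 - 0 * c)) = {0} := by
        ext o; simp
      rw [h1, h3]; simp
    · have h1 : (Finset.univ.filter (fun o : Option K =>
        0 * (vec o 0) ^ 2 + 2 * b * vec o 0 * vec o 1 + c * (vec o 1) ^ 2 = 0))
          = {none, some (-c / (2 * b))} := by
        ext o; cases o with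
        | none => simp [vec]
        | some x =>
          simp [vec]
          rw [eq_div_iff (mul_ne_zero h2 hb)]
          constructor <;> intro h <;> linear_combination h
      have h3 : (Finset.univ.filter (fun w : K => w * w = b ^ 2 - 0 * c)) = {b, -b} := by
        ext o
        simp only [Finset.mem_filter, Finset.mem_univ, true_and, Finset.mem_insert,
          Finset.mem_singleton]
        rw [← sq_eq_sq_iff_eq_or_eq_neg]
        constructor <;> intro h <;> linear_combination h
      rw [h1, h3, Finset.card_pair (by simp), Finset.card_pair]
      intro h
      have : 2 * b = 0 := by linear_combination h
      exact (mul_ne_zero h2 hb) this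
  · symm
    apply Finset.card_bij (fun w _ => some ((w - b) / a))
    · intro w hw
      simp only [Finset.mem_filter, Finset.mem_univ, true_and] at hw ⊢
      simp [vec]
      field_simp
      linear_combination hw
    · intro w _ w' _ h
      simp only [Option.some.injEq] at h
      field_simp at h
      linear_combination h
    · intro o ho
      rw [Finset.mem_filter] at ho
      replace ho := ho.2
      cases o with
      | none => simp [vec, ha] at ho
      | some x =>
        simp [vec] at ho
        refine ⟨a * x + b, ?_, ?_⟩
        · simp
          linear_combination a * ho
        · simp [ha]

def vecN : Option F → (ℕ × ℕ) × (ℕ × ℕ)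
  | none => ((1, 0), (0, 0))
  | some x => (toN x, (1, 0))

def countN (a b : (ℕ × ℕ) × (ℕ × ℕ)) : ℕ :=
  let P := mulN (addN (mulN a.1 a.1) (smulN 6 (mulN a.2 a.2)))
    (addN (mulN b.1 b.1) (smulN 6 (mulN b.2 b.2)))
  let Q := mulN a.1 b.1
  let R := mulN a.2 b.2
  let al := addN P (smulN 6 (mulN Q Q))
  let be := smulN 4 (mulN Q R)
  let ga := addN (smulN 6 P) (smulN 4 (mulN R R))
  if zeroN al = true ∧ zeroN be = true ∧ zeroN ga = true then 50 else
    sN (addN (mulN be be) (smulN 6 (mulN al ga)))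

theorem count_eq (a b : Option F) :
    (Finset.univ.filter (fun o : Option K =>
      MK3Form (vec (a.map e)) (vec (b.map e)) (vec o) = 0)).card = countN (vecN a) (vecN b) := by
  have h (a : Option F) : vec (a.map e) 0 = phi (vecN a).1 ∧ vec (a.map e) 1 = phi (vecN a).2 := by
    cases a with
    | none => simp [vec, vecN, phi]
    | some x => simp [vec, vecN, phi, e, psi]
  simp only [countN, ← phi_zero]
  rw [← card_sqrt]
  simp only [phi_add, phi_mul, phi_smul, MK3Form, h]
  generalize phi (vecN a).1 = x
  generalize phi (vecN a).2 = r
  generalize phi (vecN b).1 = y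
  generalize phi (vecN b).2 = s
  push_cast
  have h7 := seven
  have h6 : (6 : K) = -1 := by linear_combination h7
  have := count_quad ((x * x + 6 * (r * r)) * (y * y + 6 * (s * s)) + 6 * (x * y * (x * y)))
    (4 * (x * y * (r * s)))
    (6 * ((x * x + 6 * (r * r)) * (y * y + 6 * (s * s))) + 4 * (r * s * (r * s)))
  refine Eq.trans (congrArg Finset.card (Finset.filter_congr fun o _ => ?_)) (this.trans ?_)
  · apply Eq.congr _ rfl
    generalize vec o 0 = z
    generalize vec o 1 = t
    rw [h6]
    linear_combination (-2 * x * y * r * s * z * t - 2 * r ^ 2 * s ^ 2 * t ^ 2) * h7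
  · refine if_congr Iff.rfl rfl (congrArg Finset.card (Finset.filter_congr fun w _ => ?_))
    apply Eq.congr rfl
    rw [h6]; ring

theorem total : ∑ a : Option F, ∑ b : Option F, countN (vecN a) (vecN b) = 2843 := by
  decide +kernel

theorem vec_ne (o : Option K) : vec o ≠ 0 := by
  intro h
  cases o with
  | none => simpa [vec] using congrFun h 0
  | some x => simpa [vec] using congrFun h 1

noncomputable def toP (o : Option K) : Projectivization K (Fin 2 → K) :=
  Projectivization.mk K (vec o) (vec_ne o)

theorem toP_bij : Function.Bijective toP := by
  constructor
  · intro o o' h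
    simp only [toP] at h
    rw [Projectivization.mk_eq_mk_iff'] at h
    obtain ⟨c, hc⟩ := h
    have h0 := congrFun hc 0
    have h1 := congrFun hc 1
    cases o <;> cases o' <;> simp_all [vec]
  · intro P
    induction P using Projectivization.ind with
    | h v hv =>
    by_cases h1 : v 1 = 0
    · have h0 : v 0 ≠ 0 := by
        intro h0; apply hv; ext j; fin_cases j <;> simp [h0, h1]
      refine ⟨none, ?_⟩
      simp only [toP]
      rw [Projectivization.mk_eq_mk_iff']
      refine ⟨(v 0)⁻¹, ?_⟩
      ext j; fin_cases j <;> simp [vec, h0, h1]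
    · refine ⟨some (v 0 / v 1), ?_⟩
      simp only [toP]
      rw [Projectivization.mk_eq_mk_iff']
      refine ⟨(v 1)⁻¹, ?_⟩
      ext j; fin_cases j <;> simp [vec, h1]; field_simp

theorem rep_toP (o : Option K) : ∃ c : K, c ≠ 0 ∧ c • (toP o).rep = vec o := by
  obtain ⟨c, hc⟩ := Projectivization.exists_smul_eq_mk_rep K (vec o) (vec_ne o)
  refine ⟨(c⁻¹ : Kˣ), Units.ne_zero _, ?_⟩
  simp only [toP]
  rw [← hc]
  simp [Units.smul_def, smul_smul]

theorem form_rep (a b c : Option K) :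
    MK3Form (toP a).rep (toP b).rep (toP c).rep = 0 ↔ MK3Form (vec a) (vec b) (vec c) = 0 := by
  obtain ⟨u, hu, hu'⟩ := rep_toP a
  obtain ⟨v, hv, hv'⟩ := rep_toP b
  obtain ⟨w, hw, hw'⟩ := rep_toP c
  rw [← hu', ← hv', ← hw']
  have : MK3Form (u • (toP a).rep) (v • (toP b).rep) (w • (toP c).rep) =
      (u * v * w) ^ 2 * MK3Form (toP a).rep (toP b).rep (toP c).rep := by
    simp only [MK3Form, Pi.smul_apply, smul_eq_mul]; ring
  rw [this]
  simp [hu, hv, hw]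

noncomputable def eP : Option F ≃ Option K := e.optionCongr

theorem final : Set.ncard {P : Projectivization K (Fin 2 → K) × Projectivization K (Fin 2 → K) ×
        Projectivization K (Fin 2 → K) | MK3Form P.1.rep P.2.1.rep P.2.2.rep = 0} = 2843 := by
  let E : Option K ≃ Projectivization K (Fin 2 → K) := Equiv.ofBijective toP toP_bij
  let G : Option F × Option F × Option K ≃ Projectivization K (Fin 2 → K) ×
    Projectivization K (Fin 2 → K) × Projectivization K (Fin 2 → K) :=
    (eP.trans E).prodCongr ((eP.trans E).prodCongr E)
  have h1 : {P : Projectivization K (Fin 2 → K) × Projectivization K (Fin 2 → K) ×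
        Projectivization K (Fin 2 → K) | MK3Form P.1.rep P.2.1.rep P.2.2.rep = 0} =
      G '' ((Finset.univ.filter (fun q : Option F × Option F × Option K =>
        MK3Form (vec (q.1.map e)) (vec (q.2.1.map e)) (vec q.2.2) = 0) : Finset _) : Set _) := by
    ext P
    obtain ⟨q, rfl⟩ := G.surjective P
    rw [G.injective.mem_set_image]
    simp only [Set.mem_ofPred_eq, Finset.coe_filter, Finset.mem_univ, true_and]
    exact form_rep (q.1.map e) (q.2.1.map e) q.2.2
  rw [h1, Set.ncard_image_of_injective _ G.injective, Set.ncard_coe_finset,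
    Finset.card_filter, Fintype.sum_prod_type, ← total]
  refine Finset.sum_congr rfl fun a _ => ?_
  rw [Fintype.sum_prod_type]
  refine Finset.sum_congr rfl fun b _ => ?_
  rw [← count_eq, Finset.card_filter]

end MK3

/-- point count in Proposition 4.3. The `(2,2,2)`-form
`(x²−r²)(y²−s²)(z²−t²) − (xyz + 3rst)² − (rst)²` vanishes at exactly `2843` points of
`ℙ¹ × ℙ¹ × ℙ¹` over the field `𝔽₄₉` with `49 = 7²` elements. Since the form is homogeneous
of degree 2 in each pair of coordinates, its vanishing is independent of the chosen
representatives. -/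
theorem stmt15 :
    Set.ncard {P : Projectivization (GaloisField 7 2) (Fin 2 → GaloisField 7 2) ×
        Projectivization (GaloisField 7 2) (Fin 2 → GaloisField 7 2) ×
        Projectivization (GaloisField 7 2) (Fin 2 → GaloisField 7 2) |
      MK3Form P.1.rep P.2.1.rep P.2.2.rep = 0} = 2843 := by
  exact MK3.final
end
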